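/- arXiv:2206.05208 — 2 statements merged into one kernel-verified Lean document; each statement's English description precedes it below -/
import Mathlib

section
/- For every tiling recognizable picture language R ⊆ Σ^{++} there exist k ≥ 2, a finite alphabet Λ with |Λ| = 2 + 2·|Σ|, a 2k-SLT picture language L ⊆ Λ^{++}, and a projection ρ : Λ → Σ ∪ {$} such that the padded language R^(k) satisfies R^(k) = ρ(L). Moreover there is an absolute constant c such that, if R is recognized by a tiling system with a local alphabet of size n ≥ 2, then k can be chosen with k ≤ c·log₂ n. -/
/-- A picture over alphabet `A`: a rectangular array with at least one row
and one column. -/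
structure Picture (A : Type) : Type where
  rows : ℕ
  cols : ℕ
  rows_pos : 0 < rows
  cols_pos : 0 < cols
  pix : Fin rows → Fin cols → A

namespace Picture

/-- Pixelwise projection of a picture along a map of alphabets. -/
def map {A B : Type} (f : A → B) (p : Picture A) : Picture B :=
  ⟨p.rows, p.cols, p.rows_pos, p.cols_pos, fun i j => f (p.pix i j)⟩

/-- The pixel at (i,j) (0-based), or `none` if out of range. -/
def pget {A : Type} (p : Picture A) (i j : ℕ) : Option A :=
  if h : i < p.rows ∧ j < p.cols then some (p.pix ⟨i, h.1⟩ ⟨j, h.2⟩) else none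

/-- The pixel at position (i,j) of the bordered picture of `p`, where the
border symbol `#` is `none`; row 0 and column 0 are border rows, the content
occupies rows `1..p.rows` and columns `1..p.cols`, and every other position
is a border (`#`) position. -/
def bpix {A : Type} (p : Picture A) (i j : ℕ) : Option A :=
  if h : 1 ≤ i ∧ i ≤ p.rows ∧ 1 ≤ j ∧ j ≤ p.cols then
    some (p.pix ⟨i - 1, by omega⟩ ⟨j - 1, by omega⟩)
  else none

end Picture

/-- A `k`-tile over `A ∪ {#}`, the border symbol `#` being `none`. -/
abbrev BTile (A : Type) (k : ℕ) := Fin k → Fin k → Option A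

/-- Number of rows of the bordered version of `p` used for `k`-tiles:
one border row on top and at least one at the bottom, with as many extra
border rows at the bottom as needed for `k × k` subpictures to exist. -/
def borderRows {A : Type} (p : Picture A) (k : ℕ) : ℕ := max (p.rows + 2) k

/-- Number of columns of the bordered version of `p` used for `k`-tiles. -/
def borderCols {A : Type} (p : Picture A) (k : ℕ) : ℕ := max (p.cols + 2) k

/-- The set of `k`-tiles of the bordered picture of `p`. -/
def tilesOf {A : Type} (k : ℕ) (p : Picture A) : Set (BTile A k) :=
  { t | ∃ i j : ℕ, i + k ≤ borderRows p k ∧ j + k ≤ borderCols p k ∧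
      ∀ a b : Fin k, t a b = p.bpix (i + (a : ℕ)) (j + (b : ℕ)) }

/-- The `k`-strictly-locally-testable language defined by the tile set `T`:
all pictures each of whose `k`-tiles (of the bordered picture) is in `T`. -/
def SLTLang {A : Type} (k : ℕ) (T : Set (BTile A k)) : Set (Picture A) :=
  { p | tilesOf k p ⊆ T }

/-- The padded language `R^(k)` over `Σ ∪ {$}` (the padding symbol `$`
being `none`): each picture of `R` is extended with between 1 and `k`
columns of `$` on the right and between 1 and `k` rows of `$` at the
bottom, so that both sides of the result are multiples of `k`. -/
def padded {Sig : Type} (k : ℕ) (R : Set (Picture Sig)) :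
    Set (Picture (Option Sig)) :=
  { q | ∃ p ∈ R,
      p.rows < q.rows ∧ q.rows ≤ p.rows + k ∧
      p.cols < q.cols ∧ q.cols ≤ p.cols + k ∧
      k ∣ q.rows ∧ k ∣ q.cols ∧
      ∀ i j : ℕ, i < q.rows → j < q.cols → q.pget i j = some (p.pget i j) }

/-- A picture language is tiling recognizable (is in REC) if it is the
projection of a local (2-SLT) language over some finite local alphabet. -/
def TilingRecognizable {Sig : Type} (R : Set (Picture Sig)) : Prop :=
  ∃ (Gam : Type) (_ : Fintype Gam) (T : Set (BTile Gam 2)) (π : Gam → Sig),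
    R = Picture.map π '' SLTLang 2 T

/-- The padded language `R^(k)` is the projection, under some
`ρ : Λ → Σ ∪ {$}` with `|Λ| = 2 + 2·|Σ|`, of a `2k`-SLT language over
`Λ`. -/
def PaddedEMT (Sig : Type) [Fintype Sig] (R : Set (Picture Sig)) (k : ℕ) : Prop :=
  ∃ (Lam : Type) (_ : Fintype Lam),
    Fintype.card Lam = 2 + 2 * Fintype.card Sig ∧
    ∃ (T' : Set (BTile Lam (2 * k))) (ρ : Lam → Option Sig),
      padded k R = Picture.map ρ '' SLTLang (2 * k) T'

/-!
Let `R` be the projection of a local language `S`. Every pixel of a padded picture of `S` is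
projected, and a one-bit layer is added in which each `k × k` block stores a synchronization pattern
together with an injective code of the first row and the first column of the block, its *frame*.
This code fits as soon as `k` is of the order of the logarithm of the local alphabet, because a
frame has about `2k` pixels and a block about `k²` bits.

Suppose that every `2k × 2k` window of `x` occurs in an encoded picture. Overlapping windows share
a full `k × k` square, so the synchronization pattern propagates the alignment of the blocks from
the top left corner, and each two by two group of blocks of `x` comes from an encoded picture by a
shift by whole blocks. Decode every block with its own such picture. Two pictures decoding the same
block have the same frame there, and `2 × 2` windows meet the next blocks only in their frames, so
the decoded picture lies in the `2 × 2` local closure of the padded pictures of `S`. The latter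
consists of paddings of pictures of `S`, and the width of the padding, at most `k`, can be read off
a `2k × 2k` window.
-/

namespace Picture

variable {A B : Type}

/-- The pixel of `p` at integer coordinates `(r, c)`, 0-based, and `none` outside `p`: with the
border indexed by `-1` and by the size of `p`, the blocks of a picture are the fibres of
`(r, c) ↦ (r / k, c / k)`, including the border. -/
def cell (p : Picture A) (r c : ℤ) : Option A :=
  if h : (0 ≤ r ∧ r < p.rows) ∧ (0 ≤ c ∧ c < p.cols) then
    some (p.pix ⟨r.toNat, by omega⟩ ⟨c.toNat, by omega⟩)
  else none

theorem isSome_cell (p : Picture A) (r c : ℤ) :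
    (p.cell r c).isSome ↔ (0 ≤ r ∧ r < p.rows) ∧ (0 ≤ c ∧ c < p.cols) := by
  unfold cell; split_ifs with h <;> simp [h]

theorem cell_eq_none {p : Picture A} {r c : ℤ} :
    p.cell r c = none ↔ ¬((0 ≤ r ∧ r < p.rows) ∧ (0 ≤ c ∧ c < p.cols)) := by
  rw [← isSome_cell, Option.not_isSome_iff_eq_none]

theorem cell_fin (p : Picture A) (i : Fin p.rows) (j : Fin p.cols) :
    p.cell (i : ℕ) (j : ℕ) = some (p.pix i j) := by
  simp [cell]

theorem cell_natCast (p : Picture A) (i j : ℕ) : p.cell i j = p.pget i j := by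
  simp [cell, pget]

theorem bpix_eq_cell (p : Picture A) (i j : ℕ) : p.bpix i j = p.cell (i - 1) (j - 1) := by
  by_cases h : 1 ≤ i ∧ i ≤ p.rows ∧ 1 ≤ j ∧ j ≤ p.cols
  · rw [bpix, cell, dif_pos h, dif_pos (by omega)]
    congr <;> omega
  · rw [bpix, cell, dif_neg h, dif_neg (by omega)]

theorem cell_map (f : A → B) (p : Picture A) (r c : ℤ) :
    (p.map f).cell r c = (p.cell r c).map f := by
  unfold cell map; split_ifs <;> rfl

theorem ext_cell {p q : Picture A} (h : ∀ r c, p.cell r c = q.cell r c) : p = q := by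
  have hdom (r c : ℤ) : (0 ≤ r ∧ r < p.rows) ∧ (0 ≤ c ∧ c < p.cols) ↔
      (0 ≤ r ∧ r < q.rows) ∧ (0 ≤ c ∧ c < q.cols) := by
    rw [← isSome_cell, ← isSome_cell, h]
  have hp := hdom (p.rows - 1) (p.cols - 1)
  have hq := hdom (q.rows - 1) (q.cols - 1)
  obtain ⟨m, n, hm, hn, f⟩ := p
  obtain ⟨m', n', hm', hn', f'⟩ := q
  dsimp only at hp hq
  obtain rfl : m = m' := by omega
  obtain rfl : n = n' := by omega
  congr
  funext i j
  have hij := h (i : ℕ) (j : ℕ)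
  exact Option.some.inj ((cell_fin ⟨m, n, hm, hn, f⟩ i j).symm.trans
    (hij.trans (cell_fin ⟨m, n, hm', hn', f'⟩ i j)))

theorem exists_cell_eq {m n : ℕ} (hm : 0 < m) (hn : 0 < n) {F : ℤ → ℤ → Option A}
    (hF : ∀ r c, (F r c).isSome ↔ (0 ≤ r ∧ r < m) ∧ (0 ≤ c ∧ c < n)) :
    ∃ p : Picture A, p.rows = m ∧ p.cols = n ∧ ∀ r c, p.cell r c = F r c := by
  refine ⟨⟨m, n, hm, hn, fun i j => (F (i : ℕ) (j : ℕ)).get ((hF _ _).2 (by omega))⟩,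
    rfl, rfl, fun r c => ?_⟩
  unfold cell
  split_ifs with h
  · simp [h.1.1, h.2.1]
  · exact (Option.not_isSome_iff_eq_none.1 (mt (hF r c).1 h)).symm

/-! ### Windows and local closure -/

/-- The interval `[i, i + K)` is one side of a `K`-tile in the bordered version of a picture of
length `m`. -/
def IsWindow (K m : ℕ) (i : ℤ) : Prop :=
  -1 ≤ i ∧ i + K ≤ max (m + 1 : ℤ) (K - 1)

/-- Translation by `d` of the interval `[i, i + K)` respects membership in `[0, m)` and `[0, m')`
respectively, so the borders of two pictures of these lengths show up at the same places. -/
def Aligned (K m m' : ℕ) (i d : ℤ) : Prop :=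
  ∀ r, i ≤ r → r < i + K → (0 ≤ r ∧ r < m ↔ 0 ≤ r + d ∧ r + d < m')

/-- The `K × K` window of `p` at `(i, j)` equals the one of `q` at `(i + d, j + e)`. -/
def Agree (K : ℕ) (p q : Picture A) (i j d e : ℤ) : Prop :=
  ∀ r c, i ≤ r → r < i + K → j ≤ c → c < j + K → p.cell r c = q.cell (r + d) (c + e)

section Aligned

variable {K m m' : ℕ} {i d : ℤ}

theorem Aligned.shift_eq_zero (hK : 2 ≤ K) (hm : 0 < m) (h : Aligned K m m' (-1) d) : d = 0 := by
  have h₁ := h (-1) (by omega) (by omega)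
  have h₂ := h 0 (by omega) (by omega)
  omega

theorem Aligned.length_eq (h : Aligned K m m' i d) (hm : 0 < m) (hi : i < m) (hiK : m < i + K) :
    (m' : ℤ) = m + d := by
  have h₁ := h (m - 1) (by omega) (by omega)
  have h₂ := h m (by omega) (by omega)
  omega

theorem Aligned.isWindow (hK : 2 ≤ K) (hm : 0 < m) (hi : IsWindow K m i)
    (h : Aligned K m m' i d) : IsWindow K m' (i + d) := by
  unfold IsWindow at hi ⊢
  have h₀ := h i (by omega) (by omega)
  have h₁ := h (i + 1) (by omega) (by omega)
  have h₂ := h (i + K - 2) (by omega) (by omega)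
  have h₃ := h (i + K - 1) (by omega) (by omega)
  omega

theorem IsWindow.exists_mem (hK : 2 ≤ K) (hm : 0 < m) (hi : IsWindow K m i) :
    ∃ r, i ≤ r ∧ r < i + K ∧ 0 ≤ r ∧ r < m := by
  unfold IsWindow at hi
  exact ⟨max i 0, by omega⟩

theorem exists_isWindow_last (hK : 2 ≤ K) (hm : 0 < m) :
    ∃ i, IsWindow K m i ∧ i < m ∧ m < i + K ∧ ∀ r : ℤ, -1 ≤ r → r ≤ m → m < r + K → i ≤ r := by
  refine ⟨max (m + 1) (K - 1) - K, ⟨?_, ?_⟩, ?_, ?_, ?_⟩ <;> omega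

theorem isWindow_neg_one (K m : ℕ) : IsWindow K m (-1) := by
  unfold IsWindow; omega

end Aligned

section Agree

variable {K : ℕ} {p q : Picture A} {i j d e : ℤ}

theorem Agree.isSome_iff (h : Agree K p q i j d e) {r c : ℤ} (hr : i ≤ r) (hr' : r < i + K)
    (hc : j ≤ c) (hc' : c < j + K) :
    (0 ≤ r ∧ r < p.rows) ∧ (0 ≤ c ∧ c < p.cols) ↔
      (0 ≤ r + d ∧ r + d < q.rows) ∧ (0 ≤ c + e ∧ c + e < q.cols) := by
  rw [← isSome_cell, ← isSome_cell, h r c hr hr' hc hc']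

theorem Agree.aligned (hK : 2 ≤ K) (hi : IsWindow K p.rows i) (hj : IsWindow K p.cols j)
    (h : Agree K p q i j d e) :
    Aligned K p.rows q.rows i d ∧ Aligned K p.cols q.cols j e := by
  obtain ⟨r₀, hr₀, hr₀', hr₀p⟩ := hi.exists_mem hK p.rows_pos
  obtain ⟨c₀, hc₀, hc₀', hc₀p⟩ := hj.exists_mem hK p.cols_pos
  have h₀ := h.isSome_iff hr₀ hr₀' hc₀ hc₀'
  refine ⟨fun r hr hr' => ?_, fun c hc hc' => ?_⟩
  · have hrc := h.isSome_iff hr hr' hc₀ hc₀'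
    exact ⟨fun hm => (hrc.1 ⟨hm, hc₀p⟩).1, fun hm => (hrc.2 ⟨hm, (h₀.1 ⟨hr₀p, hc₀p⟩).2⟩).1⟩
  · have hrc := h.isSome_iff hr₀ hr₀' hc hc'
    exact ⟨fun hm => (hrc.1 ⟨hr₀p, hm⟩).2, fun hm => (hrc.2 ⟨(h₀.1 ⟨hr₀p, hc₀p⟩).1, hm⟩).2⟩

theorem mem_tilesOf_iff {t : BTile A K} :
    t ∈ tilesOf K p ↔ ∃ i j : ℤ, IsWindow K p.rows i ∧ IsWindow K p.cols j ∧
      ∀ a b : Fin K, t a b = p.cell (i + (a : ℕ)) (j + (b : ℕ)) := by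
  simp only [tilesOf, borderRows, borderCols, IsWindow, Set.mem_ofPred_eq, bpix_eq_cell]
  constructor
  · rintro ⟨i, j, hi, hj, ht⟩
    refine ⟨i - 1, j - 1, by omega, by omega, fun a b => ?_⟩
    rw [ht]; congr 1 <;> push_cast <;> ring
  · rintro ⟨i, j, hi, hj, ht⟩
    refine ⟨(i + 1).toNat, (j + 1).toNat, by omega, by omega, fun a b => ?_⟩
    rw [ht]; congr 1 <;> omega

end Agree

/-- The smallest `K`-strictly-locally-testable language containing `S`. -/
def localClosure (K : ℕ) (S : Set (Picture A)) : Set (Picture A) :=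
  SLTLang K (⋃ p ∈ S, tilesOf K p)

theorem subset_localClosure (K : ℕ) (S : Set (Picture A)) : S ⊆ localClosure K S :=
  fun _ hp => Set.subset_biUnion_of_mem (u := tilesOf K) hp

theorem localClosure_mono {K : ℕ} {S S' : Set (Picture A)} (h : S ⊆ S') :
    localClosure K S ⊆ localClosure K S' :=
  fun _ hx => Set.Subset.trans hx (Set.biUnion_subset_biUnion_left h)

theorem localClosure_SLTLang_subset (K : ℕ) (T : Set (BTile A K)) :
    localClosure K (SLTLang K T) ⊆ SLTLang K T :=
  fun _ hx => Set.Subset.trans hx (Set.iUnion₂_subset fun _ hp => hp)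

theorem mem_localClosure_iff {K : ℕ} (hK : 2 ≤ K) {S : Set (Picture A)} {x : Picture A} :
    x ∈ localClosure K S ↔ ∀ i j, IsWindow K x.rows i → IsWindow K x.cols j →
      ∃ p ∈ S, ∃ d e, Agree K x p i j d e := by
  constructor
  · intro hx i j hi hj
    have htile : (fun a b : Fin K => x.cell (i + (a : ℕ)) (j + (b : ℕ))) ∈ tilesOf K x :=
      mem_tilesOf_iff.2 ⟨i, j, hi, hj, fun _ _ => rfl⟩
    obtain ⟨p, hp, hpt⟩ := Set.mem_iUnion₂.1 (hx htile)
    obtain ⟨i', j', -, -, hcell⟩ := mem_tilesOf_iff.1 hpt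
    refine ⟨p, hp, i' - i, j' - j, fun r c hr hr' hc hc' => ?_⟩
    have hrc := hcell ⟨(r - i).toNat, by omega⟩ ⟨(c - j).toNat, by omega⟩
    convert hrc using 2 <;> dsimp only <;> omega
  · intro hx t ht
    obtain ⟨i, j, hi, hj, hcell⟩ := mem_tilesOf_iff.1 ht
    obtain ⟨p, hp, d, e, h⟩ := hx i j hi hj
    obtain ⟨hrow, hcol⟩ := h.aligned hK hi hj
    refine Set.mem_iUnion₂.2 ⟨p, hp, mem_tilesOf_iff.2 ⟨i + d, j + e,
      hrow.isWindow hK x.rows_pos hi, hcol.isWindow hK x.cols_pos hj, fun a b => ?_⟩⟩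
    rw [hcell, h _ _ (by omega) (by omega) (by omega) (by omega)]
    congr 1 <;> ring

theorem map_mem_localClosure {K : ℕ} (hK : 2 ≤ K) (f : A → B) {S : Set (Picture A)}
    {x : Picture A} (hx : x ∈ localClosure K S) : x.map f ∈ localClosure K (map f '' S) := by
  rw [mem_localClosure_iff hK] at hx ⊢
  intro i j hi hj
  obtain ⟨p, hp, d, e, h⟩ := hx i j hi hj
  refine ⟨_, ⟨p, hp, rfl⟩, d, e, fun r c hr hr' hc hc' => ?_⟩
  rw [cell_map, cell_map, h r c hr hr' hc hc']

/-! ### Padding -/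

theorem exists_forall_iff_lt {P : ℕ → Prop} {M : ℕ} (h₀ : P 0) (hM : ¬P M)
    (hP : ∀ n, P (n + 1) → P n) : ∃ m, 0 < m ∧ m ≤ M ∧ ∀ n, P n ↔ n < m := by
  classical
  have hex : ∃ n, ¬P n := ⟨M, hM⟩
  have hanti : Antitone P := antitone_nat_of_succ_le hP
  refine ⟨Nat.find hex, (Nat.find_pos hex).2 (not_not.2 h₀), Nat.find_min' hex hM, fun n => ?_⟩
  exact ⟨fun hn => not_le.1 fun hle => Nat.find_spec hex (hanti hle hn),
    fun hn => not_not.1 (Nat.find_min hex hn)⟩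

theorem exists_forall_iff_lt_and_lt {P : ℕ → ℕ → Prop} {M N : ℕ} (h₀ : P 0 0) (hM : ¬P M 0)
    (hN : ¬P 0 N) (hrow : ∀ r, P (r + 1) 0 → P r 0) (hcol : ∀ c, P 0 (c + 1) → P 0 c)
    (hP : ∀ r c, P (r + 1) (c + 1) ↔ P (r + 1) c ∧ P r (c + 1)) :
    ∃ m n, (0 < m ∧ m ≤ M) ∧ (0 < n ∧ n ≤ N) ∧ ∀ r c, P r c ↔ r < m ∧ c < n := by
  obtain ⟨m, hm, hmM, hPm⟩ := exists_forall_iff_lt (P := fun r => P r 0) h₀ hM hrow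
  obtain ⟨n, hn, hnN, hPn⟩ := exists_forall_iff_lt (P := P 0) h₀ hN hcol
  refine ⟨m, n, ⟨hm, hmM⟩, ⟨hn, hnN⟩, fun r => ?_⟩
  induction r with
  | zero => exact fun c => by rw [hPn]; omega
  | succ r ihr =>
    intro c
    induction c with
    | zero => rw [hPm]; omega
    | succ c ihc => rw [hP, ihc, ihr]; omega

/-- `q` consists of `p` and of at least one row and one column of padding symbols, after it. -/
def Pads (q : Picture (Option A)) (p : Picture A) : Prop :=
  p.rows < q.rows ∧ p.cols < q.cols ∧ ∀ r c, (q.cell r c).join = p.cell r c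

theorem Pads.map {q : Picture (Option A)} {p : Picture A} (f : A → B) (h : Pads q p) :
    Pads (q.map (Option.map f)) (p.map f) := by
  refine ⟨h.1, h.2.1, fun r c => ?_⟩
  rw [cell_map, cell_map, ← h.2.2, Option.join_map_eq_map_join]

theorem mem_padded_iff {k : ℕ} {R : Set (Picture A)} {q : Picture (Option A)} :
    q ∈ padded k R ↔ ∃ p ∈ R, Pads q p ∧ (q.rows ≤ p.rows + k ∧ q.cols ≤ p.cols + k) ∧
      k ∣ q.rows ∧ k ∣ q.cols := by
  have hpget {p : Picture A} (hrow : p.rows < q.rows) (hcol : p.cols < q.cols) :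
      (∀ i j : ℕ, i < q.rows → j < q.cols → q.pget i j = some (p.pget i j)) ↔
        ∀ r c, (q.cell r c).join = p.cell r c := by
    constructor
    · intro h r c
      by_cases hrc : (0 ≤ r ∧ r < q.rows) ∧ (0 ≤ c ∧ c < q.cols)
      · lift r to ℕ using hrc.1.1
        lift c to ℕ using hrc.2.1
        rw [cell_natCast, cell_natCast, h r c (by omega) (by omega), Option.join_some]
      · rw [cell_eq_none.2 hrc, cell_eq_none.2 (by omega), Option.join_none]
    · intro h i j hi hj
      obtain ⟨a, ha⟩ := Option.isSome_iff_exists.1 ((q.isSome_cell i j).2 (by omega))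
      rw [← cell_natCast, ← cell_natCast, ← h, ha, Option.join_some]
  constructor
  · rintro ⟨p, hp, hr, hrk, hc, hck, hkr, hkc, h⟩
    exact ⟨p, hp, ⟨hr, hc, (hpget hr hc).1 h⟩, ⟨hrk, hck⟩, hkr, hkc⟩
  · rintro ⟨p, hp, ⟨hr, hc, h⟩, ⟨hrk, hck⟩, hkr, hkc⟩
    exact ⟨p, hp, hr, hrk, hc, hck, hkr, hkc, (hpget hr hc).2 h⟩

theorem map_mem_padded {k : ℕ} {S : Set (Picture A)} (f : A → B) {q : Picture (Option A)}
    (hq : q ∈ padded k S) : q.map (Option.map f) ∈ padded k (map f '' S) := by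
  rw [mem_padded_iff] at hq ⊢
  obtain ⟨p, hp, hqp, hle, hdvd⟩ := hq
  exact ⟨_, ⟨p, hp, rfl⟩, hqp.map f, hle, hdvd⟩

theorem exists_pads_of_pads_map {f : A → B} {q : Picture (Option B)} {p : Picture A}
    (h : Pads q (p.map f)) : ∃ q', Pads q' p ∧ q'.map (Option.map f) = q := by
  obtain ⟨hr, hc, hcell⟩ := h
  obtain ⟨q', hrow, hcol, hq'⟩ := exists_cell_eq q.rows_pos q.cols_pos
    (F := fun r c => (q.cell r c).map fun _ => p.cell r c) (by simp [isSome_cell])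
  have hnone (r c : ℤ) (hq : q.cell r c = none) : p.cell r c = none := by
    simpa [hq, cell_map] using (hcell r c).symm
  refine ⟨q', ⟨hrow ▸ hr, hcol ▸ hc, fun r c => ?_⟩, ext_cell fun r c => ?_⟩
  · rw [hq']
    cases hqrc : q.cell r c <;> simp [hnone _ _, hqrc]
  · rw [cell_map, hq']
    have := hcell r c
    cases hqrc : q.cell r c <;> simp_all [cell_map]

section Padding

variable {k : ℕ} {S : Set (Picture A)} {q : Picture (Option A)}

theorem exists_join_cell_eq (hq : q ∈ localClosure 2 (padded k S)) {i j : ℤ}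
    (hi : -1 ≤ i ∧ i < q.rows) (hj : -1 ≤ j ∧ j < q.cols) :
    ∃ p ∈ S, ∃ M N : ℕ, ∃ d e, p.rows < M ∧ p.cols < N ∧
      Aligned 2 q.rows M i d ∧ Aligned 2 q.cols N j e ∧
      ∀ r c, i ≤ r → r ≤ i + 1 → j ≤ c → c ≤ j + 1 →
        (q.cell r c).join = p.cell (r + d) (c + e) := by
  have hi' : IsWindow 2 q.rows i := by unfold IsWindow; omega
  have hj' : IsWindow 2 q.cols j := by unfold IsWindow; omega
  obtain ⟨q', hq', d, e, h⟩ := (mem_localClosure_iff le_rfl).1 hq i j hi' hj'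
  obtain ⟨p, hp, ⟨hrow, hcol, hcell⟩, -⟩ := mem_padded_iff.1 hq'
  obtain ⟨hd, he⟩ := h.aligned le_rfl hi' hj'
  refine ⟨p, hp, q'.rows, q'.cols, d, e, hrow, hcol, hd, he, fun r c hr hr' hc hc' => ?_⟩
  rw [h r c hr (by omega) hc (by omega), hcell]

/-- `(r, c)` lies in `q` and its pixel is not a padding symbol. -/
def IsContent (q : Picture (Option A)) (r c : ℤ) : Prop :=
  (q.cell r c).join.isSome

theorem IsContent.mem {r c : ℤ} (h : IsContent q r c) :
    (0 ≤ r ∧ r < q.rows) ∧ (0 ≤ c ∧ c < q.cols) := by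
  rw [← isSome_cell]
  unfold IsContent at h
  cases hq : q.cell r c <;> simp_all

theorem exists_isContent_iff (hq : q ∈ localClosure 2 (padded k S)) {i j : ℤ}
    (hi : -1 ≤ i ∧ i < q.rows) (hj : -1 ≤ j ∧ j < q.cols) :
    ∃ m n M N : ℕ, ∃ d e, (0 < m ∧ m < M) ∧ (0 < n ∧ n < N) ∧
      Aligned 2 q.rows M i d ∧ Aligned 2 q.cols N j e ∧
      ∀ r c, i ≤ r → r ≤ i + 1 → j ≤ c → c ≤ j + 1 →
        (IsContent q r c ↔ (0 ≤ r + d ∧ r + d < m) ∧ (0 ≤ c + e ∧ c + e < n)) := by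
  obtain ⟨p, -, M, N, d, e, hM, hN, hd, he, h⟩ := exists_join_cell_eq hq hi hj
  refine ⟨p.rows, p.cols, M, N, d, e, ⟨p.rows_pos, hM⟩, ⟨p.cols_pos, hN⟩, hd, he,
    fun r c hr hr' hc hc' => ?_⟩
  rw [IsContent, h r c hr hr' hc hc', isSome_cell]

theorem isContent_succ_succ (hq : q ∈ localClosure 2 (padded k S)) (r c : ℕ) :
    IsContent q (r + 1) (c + 1) ↔ IsContent q (r + 1) c ∧ IsContent q r (c + 1) := by
  by_cases hrc : r < q.rows ∧ c < q.cols
  · obtain ⟨m, n, M, N, d, e, hm, hn, hd, he, h⟩ :=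
      exists_isContent_iff hq (i := r) (j := c) (by omega) (by omega)
    have hd₀ := hd r (by omega) (by omega)
    have he₀ := he c (by omega) (by omega)
    rw [h _ _ (by omega) (by omega) (by omega) (by omega),
      h _ _ (by omega) (by omega) (by omega) (by omega),
      h _ _ (by omega) (by omega) (by omega) (by omega)]
    omega
  · exact ⟨fun h => absurd h.mem (by omega), fun h => absurd (And.intro h.1.mem h.2.mem) (by omega)⟩

theorem isContent_zero_zero (hq : q ∈ localClosure 2 (padded k S)) : IsContent q 0 0 := by
  obtain ⟨m, n, M, N, d, e, hm, hn, hd, he, h⟩ :=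
    exists_isContent_iff hq (i := -1) (j := -1) (by omega) (by omega)
  have hd₀ := hd.shift_eq_zero le_rfl q.rows_pos
  have he₀ := he.shift_eq_zero le_rfl q.cols_pos
  exact (h 0 0 (by omega) (by omega) (by omega) (by omega)).2 (by omega)

theorem IsContent.of_succ_zero (hq : q ∈ localClosure 2 (padded k S)) {r : ℕ}
    (hr : IsContent q (r + 1) 0) : IsContent q r 0 := by
  have hmem := hr.mem
  obtain ⟨m, n, M, N, d, e, hm, hn, hd, he, h⟩ :=
    exists_isContent_iff hq (i := r) (j := 0) (by omega) (by omega)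
  have hd₀ := hd r (by omega) (by omega)
  rw [h _ _ (by omega) (by omega) (by omega) (by omega)] at hr ⊢
  omega

theorem IsContent.of_zero_succ (hq : q ∈ localClosure 2 (padded k S)) {c : ℕ}
    (hc : IsContent q 0 (c + 1)) : IsContent q 0 c := by
  have hmem := hc.mem
  obtain ⟨m, n, M, N, d, e, hm, hn, hd, he, h⟩ :=
    exists_isContent_iff hq (i := 0) (j := c) (by omega) (by omega)
  have he₀ := he c (by omega) (by omega)
  rw [h _ _ (by omega) (by omega) (by omega) (by omega)] at hc ⊢
  omega

theorem not_isContent_last (hq : q ∈ localClosure 2 (padded k S)) :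
    ¬IsContent q (q.rows - 1 : ℕ) 0 ∧ ¬IsContent q 0 (q.cols - 1 : ℕ) := by
  have hrows := q.rows_pos
  have hcols := q.cols_pos
  constructor
  · obtain ⟨m, n, M, N, d, e, hm, -, hd, -, h⟩ :=
      exists_isContent_iff hq (i := (q.rows - 1 : ℕ)) (j := 0) (by omega) (by omega)
    have hM := hd.length_eq q.rows_pos (by omega) (by omega)
    rw [h _ _ (by omega) (by omega) (by omega) (by omega)]
    omega
  · obtain ⟨m, n, M, N, d, e, -, hn, -, he, h⟩ :=
      exists_isContent_iff hq (i := 0) (j := (q.cols - 1 : ℕ)) (by omega) (by omega)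
    have hN := he.length_eq q.cols_pos (by omega) (by omega)
    rw [h _ _ (by omega) (by omega) (by omega) (by omega)]
    omega

theorem exists_isContent_iff_lt (hq : q ∈ localClosure 2 (padded k S)) :
    ∃ m n : ℕ, (0 < m ∧ m < q.rows) ∧ (0 < n ∧ n < q.cols) ∧
      ∀ r c, IsContent q r c ↔ (0 ≤ r ∧ r < m) ∧ (0 ≤ c ∧ c < n) := by
  have hrows := q.rows_pos
  have hcols := q.cols_pos
  obtain ⟨m, n, hm, hn, h⟩ := exists_forall_iff_lt_and_lt
    (P := fun r c => IsContent q r c) (isContent_zero_zero hq) (not_isContent_last hq).1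
    (not_isContent_last hq).2
    (fun _ h => IsContent.of_succ_zero hq (by exact_mod_cast h))
    (fun _ h => IsContent.of_zero_succ hq (by exact_mod_cast h))
    (fun r c => by exact_mod_cast isContent_succ_succ hq r c)
  refine ⟨m, n, by omega, by omega, fun r c => ?_⟩
  by_cases hrc : 0 ≤ r ∧ 0 ≤ c
  · lift r to ℕ using hrc.1
    lift c to ℕ using hrc.2
    rw [h]; omega
  · exact ⟨fun h => absurd h.mem (by omega), by omega⟩

theorem exists_pads_of_mem_localClosure (hS : localClosure 2 S ⊆ S)
    (hq : q ∈ localClosure 2 (padded k S)) : ∃ p ∈ S, Pads q p := by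
  obtain ⟨m, n, hm, hn, hcontent⟩ := exists_isContent_iff_lt hq
  obtain ⟨p, rfl, rfl, hp⟩ := exists_cell_eq hm.1 hn.1 hcontent
  refine ⟨p, hS ((mem_localClosure_iff le_rfl).2 fun i j hi hj => ?_),
    hm.2, hn.2, fun r c => (hp r c).symm⟩
  unfold IsWindow at hi hj
  obtain ⟨s, hs, -, -, d, e, -, -, -, -, h⟩ :=
    exists_join_cell_eq hq (i := i) (j := j) (by omega) (by omega)
  exact ⟨s, hs, d, e, fun r c hr hr' hc hc' =>
    (hp r c).trans (h r c hr (by omega) hc (by omega))⟩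

end Padding

theorem Pads.agree {q q' : Picture (Option A)} {p p' : Picture A} {K : ℕ} {i j d e : ℤ}
    (hp : Pads q p) (hp' : Pads q' p') (h : Agree K q q' i j d e) : Agree K p p' i j d e :=
  fun r c hr hr' hc hc' => by rw [← hp.2.2, ← hp'.2.2, h r c hr hr' hc hc']

theorem le_add_of_aligned {k m m' M M' : ℕ} {i d : ℤ} (hk : 2 ≤ k) (hm : 0 < m)
    (hM' : M' ≤ m' + k) (hi : M < i + 2 * k)
    (hi' : ∀ r : ℤ, -1 ≤ r → r ≤ M → M < r + (2 * k : ℕ) → i ≤ r)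
    (hM : Aligned (2 * k) M M' i d) (hmd : Aligned (2 * k) m m' i d) : M ≤ m + k := by
  by_contra! hlt
  have hi₀ := hi' (M - k - 1) (by omega) (by omega) (by omega)
  have h₀ := hM (M - k - 1) (by omega) (by omega)
  have h₁ := hmd (M - k - 1) (by omega) (by omega)
  have h₂ := hM.length_eq (by omega) (by omega) (by omega)
  omega

theorem le_add_of_pads {k : ℕ} (hk : 2 ≤ k) {R : Set (Picture A)} {z : Picture (Option A)}
    {p : Picture A} (hz : z ∈ localClosure (2 * k) (padded k R)) (hzp : Pads z p) :
    z.rows ≤ p.rows + k ∧ z.cols ≤ p.cols + k := by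
  have hK : 2 ≤ 2 * k := by omega
  have hwin {i j : ℤ} (hi : IsWindow (2 * k) z.rows i) (hj : IsWindow (2 * k) z.cols j) :
      ∃ (z' : Picture (Option A)) (p' : Picture A) (d e : ℤ),
        (z'.rows ≤ p'.rows + k ∧ z'.cols ≤ p'.cols + k) ∧
        Aligned (2 * k) z.rows z'.rows i d ∧ Aligned (2 * k) z.cols z'.cols j e ∧
        Agree (2 * k) p p' i j d e := by
    obtain ⟨z', hz', d, e, h⟩ := (mem_localClosure_iff hK).1 hz i j hi hj
    obtain ⟨p', -, hzp', hle, -⟩ := mem_padded_iff.1 hz'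
    exact ⟨z', p', d, e, hle, (h.aligned hK hi hj).1, (h.aligned hK hi hj).2, hzp.agree hzp' h⟩
  constructor
  · obtain ⟨i, hi, -, hiM, hi'⟩ := exists_isWindow_last hK z.rows_pos
    obtain ⟨z', p', d, e, hle, hd, he, h⟩ := hwin hi (isWindow_neg_one _ _)
    obtain rfl := he.shift_eq_zero hK z.cols_pos
    refine le_add_of_aligned hk p.rows_pos hle.1 (by omega) hi' hd fun r hr hr' => ?_
    simpa [p.cols_pos, p'.cols_pos] using
      h.isSome_iff (c := 0) hr hr' (by omega) (by omega)
  · obtain ⟨j, hj, -, hjM, hj'⟩ := exists_isWindow_last hK z.cols_pos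
    obtain ⟨z', p', d, e, hle, hd, he, h⟩ := hwin (isWindow_neg_one _ _) hj
    obtain rfl := hd.shift_eq_zero hK z.rows_pos
    refine le_add_of_aligned hk p.cols_pos hle.2 (by omega) hj' he fun c hc hc' => ?_
    simpa [p.rows_pos, p'.rows_pos] using
      h.isSome_iff (r := 0) (by omega) (by omega) hc hc'

/-! ### Block codes -/

/-- The possible contents of the first row and of the first column of a block of side `k`. -/
abbrev BlockFrame (A : Type) (k : ℕ) := (Fin k → Option A) × (Fin k → Option A)

/-- The first row and the first column of the block `(I, J)` of `p`, which occupies the rows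
`I * k, …, I * k + k - 1` and the columns `J * k, …, J * k + k - 1`. -/
def frame (k : ℕ) (p : Picture A) (I J : ℤ) : BlockFrame A k :=
  (fun v => p.cell (I * k) (J * k + (v : ℕ)), fun u => p.cell (I * k + (u : ℕ)) (J * k))

/-- The positions of a block of side `k` that carry the encoding of its frame. -/
noncomputable def codeBox (k : ℕ) : Finset (ℤ × ℤ) :=
  Finset.Ico 2 (k : ℤ) ×ˢ Finset.Ico 0 (k - 1 : ℤ)

/-- The bit at `(r, c)` when each block of side `k` is filled with the indicator of `s ⊆ codeBox k`
under the synchronization pattern: a row of ones, a row of ones ending in a zero, and zeros at the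
right end of all other rows. -/
def syncBit (k : ℕ) (s : Finset (ℤ × ℤ)) (r c : ℤ) : Bool :=
  decide (r % k = 0 ∨ c % k ≠ k - 1 ∧ (r % k = 1 ∨ (r % k, c % k) ∈ s))

theorem syncBit_add_mul (k : ℕ) (s : Finset (ℤ × ℤ)) (r c D E : ℤ) :
    syncBit k s (r + D * k) (c + E * k) = syncBit k s r c := by
  simp only [syncBit, Int.add_mul_emod_self_right]

theorem subset_of_syncBit_eq {k : ℕ} {s t : Finset (ℤ × ℤ)} {I J : ℤ} (hs : s ⊆ codeBox k)
    (h : ∀ r c, r / k = I → c / k = J → syncBit k s r c = syncBit k t r c) : s ⊆ t := by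
  rintro ⟨u, v⟩ huv
  have hbox := hs huv
  simp only [codeBox, Finset.mem_product, Finset.mem_Ico] at hbox
  have hdiv {n : ℤ} (N : ℤ) (hn : 0 ≤ n) (hn' : n < k) : (n + N * k) / k = N := by
    rw [Int.add_mul_ediv_right _ _ (by omega), Int.ediv_eq_zero_of_lt hn hn', zero_add]
  have hbit := h (u + I * k) (v + J * k) (hdiv I (by omega) (by omega))
    (hdiv J (by omega) (by omega))
  have hu : u % k = u := Int.emod_eq_of_lt (by omega) (by omega)
  have hv : v % k = v := Int.emod_eq_of_lt (by omega) (by omega)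
  rw [syncBit_add_mul, syncBit_add_mul, syncBit, syncBit, hu, hv, decide_eq_decide] at hbit
  have ht := hbit.1 (Or.inr ⟨by omega, Or.inr huv⟩)
  rcases ht with h₀ | ⟨-, h₁ | ht⟩
  · omega
  · omega
  · exact ht

theorem exists_emod_eq {k : ℕ} {u : ℤ} (hu : 0 ≤ u) (huk : u < k) (i : ℤ) :
    ∃ r, i ≤ r ∧ r < i + k ∧ r % k = u := by
  have hk : (0 : ℤ) < k := by omega
  refine ⟨i + (u - i) % k, ?_, ?_, ?_⟩
  · linarith [Int.emod_nonneg (u - i) hk.ne']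
  · linarith [Int.emod_lt_of_pos (u - i) hk]
  · rw [Int.add_emod_emod, add_sub_cancel, Int.emod_eq_of_lt hu huk]

theorem dvd_of_syncBit_eq {k : ℕ} (hk : 2 ≤ k) {s t : ℤ → ℤ → Finset (ℤ × ℤ)} {i j d e : ℤ}
    (h : ∀ r c, i ≤ r → r < i + k → j ≤ c → c < j + k →
      syncBit k (s r c) r c = syncBit k (t r c) (r + d) (c + e)) : (k : ℤ) ∣ d ∧ (k : ℤ) ∣ e := by
  obtain ⟨r₀, hr₀, hr₀', hr₀k⟩ := exists_emod_eq (k := k) (u := 0) (by omega) (by omega) i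
  obtain ⟨r₁, hr₁, hr₁', hr₁k⟩ := exists_emod_eq (k := k) (u := 1) (by omega) (by omega) i
  obtain ⟨c₀, hc₀, hc₀', hc₀k⟩ :=
    exists_emod_eq (k := k) (u := k - 1) (by omega) (by omega) (j + e)
  obtain ⟨c₁, hc₁, hc₁', hc₁k⟩ := exists_emod_eq (k := k) (u := k - 1) (by omega) (by omega) j
  have hbit₀ := h r₀ (c₀ - e) hr₀ hr₀' (by omega) (by omega)
  have hbit₁ := h r₁ c₁ hr₁ hr₁' hc₁ hc₁'
  -- Only the rows `≡ 0` of a block end in a one.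
  have hd : (k : ℤ) ∣ d := by
    simp only [syncBit, hr₀k, sub_add_cancel, hc₀k] at hbit₀
    exact (Int.dvd_add_right (Int.dvd_of_emod_eq_zero hr₀k)).1
      (Int.dvd_of_emod_eq_zero (by simpa using hbit₀))
  refine ⟨hd, (Int.left_modEq_add_iff (a := c₁)).1 ?_⟩
  have hr₁d : (r₁ + d) % k = 1 := by
    rw [← hr₁k]
    exact Int.add_modEq_left_iff.2 hd
  -- The only zero in a row `≡ 1` of a block is its last bit.
  simp only [syncBit, hr₁k, hr₁d, hc₁k] at hbit₁
  exact hc₁k.trans (Eq.symm (by simpa using hbit₁))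

/-- The picture `p`, recoloured by `π`, with a second layer in which `φ` encodes the frame of each
block of side `k`. -/
def blockCode (k : ℕ) (φ : BlockFrame A k ↪ (codeBox k).powerset) (π : A → B)
    (p : Picture A) : Picture (B × Bool) where
  rows := p.rows
  cols := p.cols
  rows_pos := p.rows_pos
  cols_pos := p.cols_pos
  pix i j := (π (p.pix i j),
    syncBit k (φ (frame k p ((i : ℕ) / k : ℤ) ((j : ℕ) / k : ℤ))).1 (i : ℕ) (j : ℕ))

section BlockCode

variable {k : ℕ} {φ : BlockFrame A k ↪ (codeBox k).powerset} {π : A → B}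

theorem cell_blockCode (p : Picture A) (r c : ℤ) :
    (p.blockCode k φ π).cell r c =
      (p.cell r c).map fun a => (π a, syncBit k (φ (p.frame k (r / k) (c / k))).1 r c) := by
  unfold cell blockCode
  split_ifs with h
  · simp [h.1.1, h.2.1]
  · rfl

theorem syncBit_eq_of_cell_eq {p q : Picture A} {r c r' c' : ℤ}
    (h : (p.blockCode k φ π).cell r c = (q.blockCode k φ π).cell r' c')
    (hp : (p.cell r c).isSome) :
    syncBit k (φ (p.frame k (r / k) (c / k))).1 r c =
      syncBit k (φ (q.frame k (r' / k) (c' / k))).1 r' c' := by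
  obtain ⟨a, ha⟩ := Option.isSome_iff_exists.1 hp
  rw [cell_blockCode, cell_blockCode, ha] at h
  cases hq : q.cell r' c' <;> simp_all

theorem dvd_sub_of_agree (hk : 2 ≤ k) {x : Picture (B × Bool)} {p q : Picture A} {K : ℕ}
    {i j d e i' j' d' e' a b : ℤ} (hp : Agree K x (p.blockCode k φ π) i j d e)
    (hq : Agree K x (q.blockCode k φ π) i' j' d' e')
    (ha : max 0 (max i i') ≤ a ∧ a + k ≤ min (x.rows : ℤ) (min (i + K) (i' + K)))
    (hb : max 0 (max j j') ≤ b ∧ b + k ≤ min (x.cols : ℤ) (min (j + K) (j' + K))) :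
    (k : ℤ) ∣ d' - d ∧ (k : ℤ) ∣ e' - e := by
  refine dvd_of_syncBit_eq hk (i := a + d) (j := b + e)
    (s := fun r c => (φ (p.frame k (r / k) (c / k))).1)
    (t := fun r c => (φ (q.frame k ((r + (d' - d)) / k) ((c + (e' - e)) / k))).1)
    fun r c hr hr' hc hc' => ?_
  have hxp := hp (r - d) (c - e) (by omega) (by omega) (by omega) (by omega)
  have hxq := hq (r - d) (c - e) (by omega) (by omega) (by omega) (by omega)
  have hmem := (isSome_cell x (r - d) (c - e)).2 (by omega)
  rw [sub_add_cancel, sub_add_cancel] at hxp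
  rw [sub_add_eq_add_sub r, sub_add_eq_add_sub c, add_sub_assoc r, add_sub_assoc c] at hxq
  rw [hxp, cell_blockCode, Option.isSome_map] at hmem
  exact syncBit_eq_of_cell_eq (hxp.symm.trans hxq) hmem

variable {P : Set (Picture A)} {x : Picture (B × Bool)}

theorem exists_agree_blockCode (hk : 2 ≤ k)
    (hx : x ∈ localClosure (2 * k) (blockCode k φ π '' P)) {i j : ℤ}
    (hi : IsWindow (2 * k) x.rows i) (hj : IsWindow (2 * k) x.cols j) :
    ∃ p ∈ P, ∃ d e, Agree (2 * k) x (p.blockCode k φ π) i j d e ∧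
      Aligned (2 * k) x.rows p.rows i d ∧ Aligned (2 * k) x.cols p.cols j e := by
  obtain ⟨_, ⟨p, hp, rfl⟩, d, e, h⟩ := (mem_localClosure_iff (by omega)).1 hx i j hi hj
  exact ⟨p, hp, d, e, h, h.aligned (by omega) hi hj⟩

theorem le_size_of_mem_localClosure (hk : 2 ≤ k)
    (hP : ∀ p ∈ P, k ∣ p.rows ∧ k ∣ p.cols)
    (hx : x ∈ localClosure (2 * k) (blockCode k φ π '' P)) : k ≤ x.rows ∧ k ≤ x.cols := by
  obtain ⟨p, hp, d, e, -, hd, he⟩ :=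
    exists_agree_blockCode hk hx (isWindow_neg_one _ _) (isWindow_neg_one _ _)
  obtain rfl := hd.shift_eq_zero (by omega) x.rows_pos
  obtain rfl := he.shift_eq_zero (by omega) x.cols_pos
  have hrows := Nat.le_of_dvd p.rows_pos (hP p hp).1
  have hcols := Nat.le_of_dvd p.cols_pos (hP p hp).2
  have hd₁ := hd (k - 1) (by omega) (by omega)
  have he₁ := he (k - 1) (by omega) (by omega)
  omega

theorem dvd_of_agree_blockCode (hk : 2 ≤ k) (hP : ∀ p ∈ P, k ∣ p.rows ∧ k ∣ p.cols)
    (hx : x ∈ localClosure (2 * k) (blockCode k φ π '' P)) {i j : ℤ}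
    (hi : IsWindow (2 * k) x.rows i) (hj : IsWindow (2 * k) x.cols j) {p : Picture A} {d e : ℤ}
    (h : Agree (2 * k) x (p.blockCode k φ π) i j d e) : (k : ℤ) ∣ d ∧ (k : ℤ) ∣ e := by
  -- Slide the window from the top left corner, where the border allows no shift.
  obtain ⟨n, hin, hjn⟩ : ∃ n : ℕ, i < n ∧ j < n := ⟨(max i j + 1).toNat, by omega, by omega⟩
  induction n generalizing i j p d e with
  | zero =>
    unfold IsWindow at hi hj
    obtain ⟨hd, he⟩ := h.aligned (by omega) hi hj
    obtain rfl : i = -1 := by omega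
    obtain rfl : j = -1 := by omega
    rw [hd.shift_eq_zero (by omega) x.rows_pos, he.shift_eq_zero (by omega) x.cols_pos]
    exact ⟨dvd_zero _, dvd_zero _⟩
  | succ n ih =>
    obtain ⟨hrows, hcols⟩ := le_size_of_mem_localClosure hk hP hx
    have hi' : IsWindow (2 * k) x.rows (max (-1) (i - 1)) := by unfold IsWindow at hi ⊢; omega
    have hj' : IsWindow (2 * k) x.cols (max (-1) (j - 1)) := by unfold IsWindow at hj ⊢; omega
    obtain ⟨p', -, d', e', h', -⟩ := exists_agree_blockCode hk hx hi' hj'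
    obtain ⟨hd', he'⟩ := ih hi' hj' h' (by omega) (by omega)
    unfold IsWindow at hi hj
    obtain ⟨hd, he⟩ := dvd_sub_of_agree hk h' h (a := max 0 i) (b := max 0 j)
      (by omega) (by omega)
    exact ⟨(Int.dvd_iff_dvd_of_dvd_sub hd).2 hd', (Int.dvd_iff_dvd_of_dvd_sub he).2 he'⟩

theorem dvd_size_of_mem_localClosure (hk : 2 ≤ k) (hP : ∀ p ∈ P, k ∣ p.rows ∧ k ∣ p.cols)
    (hx : x ∈ localClosure (2 * k) (blockCode k φ π '' P)) : k ∣ x.rows ∧ k ∣ x.cols := by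
  obtain ⟨i, hi, him, him', -⟩ := exists_isWindow_last (K := 2 * k) (by omega) x.rows_pos
  obtain ⟨j, hj, hjn, hjn', -⟩ := exists_isWindow_last (K := 2 * k) (by omega) x.cols_pos
  obtain ⟨p, hp, d, e, h, hd, he⟩ := exists_agree_blockCode hk hx hi hj
  obtain ⟨hkd, hke⟩ := dvd_of_agree_blockCode hk hP hx hi hj h
  have hrows := Int.natCast_dvd_natCast.2 (hP p hp).1
  have hcols := Int.natCast_dvd_natCast.2 (hP p hp).2
  rw [hd.length_eq x.rows_pos him him', Int.dvd_add_left hkd, Int.natCast_dvd_natCast] at hrows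
  rw [he.length_eq x.cols_pos hjn hjn', Int.dvd_add_left hke, Int.natCast_dvd_natCast] at hcols
  exact ⟨hrows, hcols⟩

/-- The pixels of `x` in the four blocks `(I, J)`, …, `(I + 1, J + 1)` of side `k`, including the
border next to `x`, are those of `q` at the positions translated by `D` and `E` blocks. -/
def BlockAgree (k : ℕ) (x q : Picture B) (I J D E : ℤ) : Prop :=
  ∀ r c : ℤ, -1 ≤ r ∧ r ≤ x.rows → r / k = I ∨ r / k = I + 1 →
    -1 ≤ c ∧ c ≤ x.cols → c / k = J ∨ c / k = J + 1 →
    x.cell r c = q.cell (r + D * k) (c + E * k)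

theorem exists_isWindow_covering {k : ℕ} (hk : 0 < k) (m : ℕ) (I : ℤ) :
    ∃ i : ℤ, IsWindow (2 * k) m i ∧ ∀ r : ℤ, -1 ≤ r ∧ r ≤ m → r / k = I ∨ r / k = I + 1 →
      i ≤ r ∧ r < i + (2 * k : ℕ) := by
  refine ⟨max (-1) (min (I * k) (m + 1 - 2 * k)), ⟨?_, ?_⟩, fun r hr hI => ?_⟩
  · omega
  · omega
  · have hle := Int.ediv_mul_le r (b := k) (by omega)
    have hlt := Int.lt_ediv_add_one_mul_self r (b := k) (by omega)
    rcases hI with hI | hI <;> rw [hI] at hle hlt <;> ring_nf at hle hlt ⊢ <;> omega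

theorem exists_blockAgree (hk : 2 ≤ k) (hP : ∀ p ∈ P, k ∣ p.rows ∧ k ∣ p.cols)
    (hx : x ∈ localClosure (2 * k) (blockCode k φ π '' P)) (I J : ℤ) :
    ∃ p ∈ P, ∃ D E, BlockAgree k x (p.blockCode k φ π) I J D E := by
  obtain ⟨i, hi, hir⟩ := exists_isWindow_covering (k := k) (by omega) x.rows I
  obtain ⟨j, hj, hjc⟩ := exists_isWindow_covering (k := k) (by omega) x.cols J
  obtain ⟨p, hp, d, e, h, -⟩ := exists_agree_blockCode hk hx hi hj
  obtain ⟨⟨D, rfl⟩, ⟨E, rfl⟩⟩ := dvd_of_agree_blockCode hk hP hx hi hj h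
  refine ⟨p, hp, D, E, fun r c hr hI hc hJ => ?_⟩
  rw [mul_comm D, mul_comm E]
  exact h r c (hir r hr hI).1 (hir r hr hI).2 (hjc c hc hJ).1 (hjc c hc hJ).2

theorem mem_of_ediv_eq {k m : ℕ} (hkm : k ∣ m) {r s : ℤ} (hr : 0 ≤ r ∧ r < m)
    (hs : s / k = r / k) : 0 ≤ s ∧ s < m := by
  obtain ⟨a, rfl⟩ := hkm
  have hk : (0 : ℤ) < k := by
    rcases k.eq_zero_or_pos with rfl | hk
    · rw [zero_mul] at hr; omega
    · exact_mod_cast hk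
  rw [← Int.ediv_nonneg_iff_of_pos hk, Nat.cast_mul, mul_comm, ← Int.ediv_lt_iff_lt_mul hk] at hr ⊢
  rwa [hs]

theorem frame_eq_of_blockAgree (hk : 0 < k) (hx : k ∣ x.rows ∧ k ∣ x.cols) {p q : Picture A}
    {I J D E D' E' r c : ℤ} (hp : BlockAgree k x (p.blockCode k φ π) I J D E)
    (hq : BlockAgree k x (q.blockCode k φ π) (r / k) (c / k) D' E')
    (hr : 0 ≤ r ∧ r < x.rows) (hI : r / k = I ∨ r / k = I + 1)
    (hc : 0 ≤ c ∧ c < x.cols) (hJ : c / k = J ∨ c / k = J + 1) :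
    p.frame k (r / k + D) (c / k + E) = q.frame k (r / k + D') (c / k + E') := by
  have hbit (s t : ℤ) (hs : s / k = r / k) (ht : t / k = c / k) :
      syncBit k (φ (p.frame k (r / k + D) (c / k + E))).1 s t =
        syncBit k (φ (q.frame k (r / k + D') (c / k + E'))).1 s t := by
    have hs' := mem_of_ediv_eq hx.1 hr hs
    have ht' := mem_of_ediv_eq hx.2 hc ht
    have hxp := hp s t (by omega) (hs ▸ hI) (by omega) (ht ▸ hJ)
    have hxq := hq s t (by omega) (.inl hs) (by omega) (.inl ht)
    have hmem := (isSome_cell x s t).2 ⟨hs', ht'⟩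
    rw [hxp, cell_blockCode, Option.isSome_map] at hmem
    have hk' : (k : ℤ) ≠ 0 := by omega
    have hpq := syncBit_eq_of_cell_eq (hxp.symm.trans hxq) hmem
    simpa only [Int.add_mul_ediv_right _ _ hk', syncBit_add_mul, hs, ht] using hpq
  exact φ.injective <| Subtype.ext <| Finset.Subset.antisymm
    (subset_of_syncBit_eq (Finset.mem_powerset.1 (φ _).2) hbit)
    (subset_of_syncBit_eq (Finset.mem_powerset.1 (φ _).2) fun s t hs ht => (hbit s t hs ht).symm)

theorem cell_eq_of_frame_eq {p q : Picture A} (hk : 0 < k) {r c D E D' E' : ℤ}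
    (h : p.frame k (r / k + D) (c / k + E) = q.frame k (r / k + D') (c / k + E'))
    (hrc : r % k = 0 ∨ c % k = 0) :
    p.cell (r + D * k) (c + E * k) = q.cell (r + D' * k) (c + E' * k) := by
  have hk' : (0 : ℤ) < k := by omega
  have hr := Int.ediv_mul_add_emod r k
  have hc := Int.ediv_mul_add_emod c k
  have hr₀ := Int.emod_nonneg r hk'.ne'
  have hc₀ := Int.emod_nonneg c hk'.ne'
  rcases hrc with h₀ | h₀
  · have hcell := congrFun (congrArg Prod.fst h)
      ⟨(c % k).toNat, by have := Int.emod_lt_of_pos c hk'; omega⟩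
    simp only [frame, Int.toNat_of_nonneg hc₀] at hcell
    convert hcell using 2 <;> linarith
  · have hcell := congrFun (congrArg Prod.snd h)
      ⟨(r % k).toNat, by have := Int.emod_lt_of_pos r hk'; omega⟩
    simp only [frame, Int.toNat_of_nonneg hr₀] at hcell
    convert hcell using 2 <;> linarith

theorem cell_eq_of_blockAgree (hk : 0 < k) (hx : k ∣ x.rows ∧ k ∣ x.cols) {p q : Picture A}
    {I J D E D' E' r c : ℤ} (hp : BlockAgree k x (p.blockCode k φ π) I J D E)
    (hq : BlockAgree k x (q.blockCode k φ π) (r / k) (c / k) D' E')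
    (hr : -1 ≤ r ∧ r ≤ x.rows) (hI : r / k = I ∨ r / k = I + 1)
    (hc : -1 ≤ c ∧ c ≤ x.cols) (hJ : c / k = J ∨ c / k = J + 1) (hrc : r % k = 0 ∨ c % k = 0) :
    p.cell (r + D * k) (c + E * k) = q.cell (r + D' * k) (c + E' * k) := by
  by_cases hmem : (0 ≤ r ∧ r < x.rows) ∧ (0 ≤ c ∧ c < x.cols)
  · exact cell_eq_of_frame_eq hk (frame_eq_of_blockAgree hk hx hp hq hmem.1 hI hmem.2 hJ) hrc
  · have hxp := hp r c hr hI hc hJ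
    have hxq := hq r c hr (.inl rfl) hc (.inl rfl)
    rw [cell_eq_none.2 hmem, cell_blockCode, eq_comm, Option.map_eq_none_iff] at hxp hxq
    rw [hxp, hxq]

theorem ediv_add_one {k : ℕ} (hk : 0 < k) (r : ℤ) :
    (r + 1) / k = r / k ∨ (r + 1) / k = r / k + 1 ∧ (r + 1) % k = 0 := by
  have hk' : (0 : ℤ) < k := by omega
  have hr := Int.emod_add_mul_ediv r k
  have hr₀ := Int.emod_nonneg r hk'.ne'
  rcases (Int.add_one_le_of_lt (Int.emod_lt_of_pos r hk')).lt_or_eq with hlt | heq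
  · exact .inl ((Int.ediv_emod_unique (r := r % k + 1) hk').2 ⟨by linarith, by omega, hlt⟩).1
  · exact .inr ((Int.ediv_emod_unique hk').2 ⟨by linarith, le_rfl, hk'⟩)

theorem exists_cell_eq_of_blockAgree {p : ℤ → ℤ → Picture A} {D E : ℤ → ℤ → ℤ}
    (h : ∀ I J, BlockAgree k x ((p I J).blockCode k φ π) I J (D I J) (E I J)) :
    ∃ q : Picture A, (q.rows = x.rows ∧ q.cols = x.cols) ∧ q.map π = x.map Prod.fst ∧
      ∀ r c : ℤ, -1 ≤ r ∧ r ≤ x.rows → -1 ≤ c ∧ c ≤ x.cols → q.cell r c =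
        (p (r / k) (c / k)).cell (r + D (r / k) (c / k) * k) (c + E (r / k) (c / k) * k) := by
  set G : ℤ → ℤ → Option A := fun r c => (p (r / k) (c / k)).cell
    (r + D (r / k) (c / k) * k) (c + E (r / k) (c / k) * k)
  have hx (r c : ℤ) (hr : -1 ≤ r ∧ r ≤ x.rows) (hc : -1 ≤ c ∧ c ≤ x.cols) :
      ∃ f : A → Bool, x.cell r c = (G r c).map fun a => (π a, f a) :=
    ⟨_, (h (r / k) (c / k) r c hr (.inl rfl) hc (.inl rfl)).trans (cell_blockCode ..)⟩
  obtain ⟨q, hrows, hcols, hq⟩ := exists_cell_eq x.rows_pos x.cols_pos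
    (F := fun r c => (x.cell r c).bind fun _ => G r c) fun r c => by
    rw [← isSome_cell]
    by_cases hrc : (0 ≤ r ∧ r < x.rows) ∧ (0 ≤ c ∧ c < x.cols)
    · obtain ⟨f, hf⟩ := hx r c (by omega) (by omega)
      rw [hf]; cases G r c <;> simp
    · simp [cell_eq_none.2 hrc]
  have hcell (r c : ℤ) (hr : -1 ≤ r ∧ r ≤ x.rows) (hc : -1 ≤ c ∧ c ≤ x.cols) :
      q.cell r c = G r c := by
    obtain ⟨f, hf⟩ := hx r c hr hc
    rw [hq, hf]; cases G r c <;> rfl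
  refine ⟨q, ⟨hrows, hcols⟩, ext_cell fun r c => ?_, hcell⟩
  rw [cell_map, cell_map]
  by_cases hrc : (0 ≤ r ∧ r < x.rows) ∧ (0 ≤ c ∧ c < x.cols)
  · obtain ⟨f, hf⟩ := hx r c (by omega) (by omega)
    rw [hcell r c (by omega) (by omega), hf, Option.map_map]
    rfl
  · rw [cell_eq_none.2 hrc, cell_eq_none.2 (by rwa [hrows, hcols])]
    rfl

theorem exists_mem_localClosure_map_eq (hk : 2 ≤ k) (hP : ∀ p ∈ P, k ∣ p.rows ∧ k ∣ p.cols)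
    (hx : x ∈ localClosure (2 * k) (blockCode k φ π '' P)) :
    ∃ q ∈ localClosure 2 P, (k ∣ q.rows ∧ k ∣ q.cols) ∧ q.map π = x.map Prod.fst := by
  have hk₀ : 0 < k := by omega
  have hxk := dvd_size_of_mem_localClosure hk hP hx
  choose p hp D E h using exists_blockAgree hk hP hx
  obtain ⟨q, ⟨hrows, hcols⟩, hqx, hq⟩ := exists_cell_eq_of_blockAgree h
  refine ⟨q, (mem_localClosure_iff le_rfl).2 fun i j hi hj => ?_, by rwa [hrows, hcols], hqx⟩
  refine ⟨_, hp (i / k) (j / k), D (i / k) (j / k) * k, E (i / k) (j / k) * k,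
    fun r c hr hr' hc hc' => ?_⟩
  unfold IsWindow at hi hj
  rw [hq r c (by omega) (by omega)]
  have near {i r : ℤ} (hr : i ≤ r) (hr' : r < i + 2) :
      r / k = i / k ∨ r / k = i / k + 1 ∧ r % k = 0 := by
    obtain rfl | rfl : r = i ∨ r = i + 1 := by omega
    exacts [.inl rfl, ediv_add_one hk₀ i]
  have hnear (hrc : r % k = 0 ∨ c % k = 0) := (cell_eq_of_blockAgree hk₀ hxk (h (i / k) (j / k))
    (h (r / k) (c / k)) (by omega) ((near hr hr').imp_right And.left) (by omega)
    ((near hc hc').imp_right And.left) hrc).symm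
  rcases near hr hr' with hri | ⟨-, hrk⟩
  · rcases near hc hc' with hcj | ⟨-, hck⟩
    · rw [hri, hcj]
    · exact hnear (.inr hck)
  · exact hnear (.inl hrk)

end BlockCode

theorem padded_eq_image_localClosure {k : ℕ} (hk : 2 ≤ k)
    (φ : BlockFrame (Option A) k ↪ (codeBox k).powerset) (f : A → B) {S : Set (Picture A)}
    (hS : localClosure 2 S ⊆ S) :
    padded k (map f '' S) =
      map Prod.fst '' localClosure (2 * k) (blockCode k φ (Option.map f) '' padded k S) := by
  have hP (q) (hq : q ∈ padded k S) : k ∣ q.rows ∧ k ∣ q.cols := by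
    obtain ⟨-, -, -, -, hdvd⟩ := mem_padded_iff.1 hq
    exact hdvd
  have hfst (q : Picture (Option A)) :
      map Prod.fst (q.blockCode k φ (Option.map f)) = q.map (Option.map f) := rfl
  apply Set.Subset.antisymm
  · intro z hz
    obtain ⟨_, ⟨p, hp, rfl⟩, hzp, hle, hdvd⟩ := mem_padded_iff.1 hz
    obtain ⟨q, hqp, rfl⟩ := exists_pads_of_pads_map hzp
    exact ⟨_, subset_localClosure _ _ ⟨q, mem_padded_iff.2 ⟨p, hp, hqp, hle, hdvd⟩, rfl⟩, hfst q⟩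
  · rintro _ ⟨x, hx, rfl⟩
    obtain ⟨q, hq, hdvd, hqx⟩ := exists_mem_localClosure_map_eq hk hP hx
    obtain ⟨p, hp, hqp⟩ := exists_pads_of_mem_localClosure hS hq
    have hmem : x.map Prod.fst ∈ localClosure (2 * k) (padded k (map f '' S)) := by
      refine localClosure_mono ?_ (map_mem_localClosure (by omega) Prod.fst hx)
      rintro _ ⟨_, ⟨r, hr, rfl⟩, rfl⟩
      exact map_mem_padded f hr
    rw [← hqx] at hmem ⊢
    exact mem_padded_iff.2
      ⟨_, ⟨p, hp, rfl⟩, hqp.map f, le_add_of_pads hk hmem (hqp.map f), hdvd⟩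

theorem nonempty_blockFrame_embedding [Fintype A] {k L : ℕ} (hA : Fintype.card A + 1 ≤ 2 ^ L)
    (hk : 2 * L + 3 ≤ k) : Nonempty (BlockFrame A k ↪ (codeBox k).powerset) := by
  obtain ⟨n, rfl⟩ : ∃ n, k = n + 3 := ⟨k - 3, by omega⟩
  apply Function.Embedding.nonempty_of_card_le
  have hbox : (codeBox (n + 3)).card = (n + 1) * (n + 2) := by
    simp only [codeBox, Finset.card_product, Int.card_Ico]
    congr 1 <;> omega
  calc Fintype.card (BlockFrame A (n + 3)) = (Fintype.card A + 1) ^ (2 * (n + 3)) := by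
        simp only [Fintype.card_prod, Fintype.card_fun, Fintype.card_option, Fintype.card_fin]
        ring
    _ ≤ (2 ^ L) ^ (2 * (n + 3)) := Nat.pow_le_pow_left hA _
    _ = 2 ^ (2 * L * (n + 3)) := by rw [← pow_mul]; ring_nf
    _ ≤ 2 ^ ((n + 1) * (n + 2)) := Nat.pow_le_pow_right two_pos (by nlinarith)
    _ = Fintype.card (codeBox (n + 3)).powerset := by
        rw [Fintype.card_coe, Finset.card_powerset, hbox]

theorem paddedEMT_of_card_le {Sig Gam : Type} [Fintype Sig] [Fintype Gam] {k L : ℕ}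
    (T : Set (BTile Gam 2)) (π : Gam → Sig) (hGam : Fintype.card Gam + 2 ≤ 2 ^ L)
    (hk : 2 * L + 3 ≤ k) : PaddedEMT Sig (map π '' SLTLang 2 T) k := by
  obtain ⟨φ⟩ : Nonempty (BlockFrame (Option Gam) k ↪ (codeBox k).powerset) :=
    nonempty_blockFrame_embedding (by rwa [Fintype.card_option]) hk
  refine ⟨Option Sig × Bool, inferInstance, ?_, _, Prod.fst,
    padded_eq_image_localClosure (by omega) φ π (localClosure_SLTLang_subset 2 T)⟩
  simp only [Fintype.card_prod, Fintype.card_option, Fintype.card_bool]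
  ring

theorem add_two_le_two_pow_log (n : ℕ) : n + 2 ≤ 2 ^ (Nat.log 2 n + 2) := by
  have hlt := Nat.lt_pow_succ_log_self one_lt_two n
  rw [pow_succ]
  omega

end Picture

/-- Extended Medvedev theorem for padded languages: for every tiling
recognizable `R ⊆ Σ^{++}` there are `k ≥ 2`, an alphabet `Λ` with
`|Λ| = 2 + 2·|Σ|`, a `2k`-SLT language `L ⊆ Λ^{++}` and a projection
`ρ : Λ → Σ ∪ {$}` with `R^(k) = ρ(L)`; moreover there is an absolute
constant `c` such that if `R` is recognized by a tiling system with a local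
alphabet of size `n ≥ 2`, then `k` can be chosen with `k ≤ c·log₂ n`. -/
theorem padded_extended_Medvedev :
    (∀ (Sig : Type) (_ : Fintype Sig) (R : Set (Picture Sig)),
      TilingRecognizable R → ∃ k : ℕ, 2 ≤ k ∧ PaddedEMT Sig R k) ∧
    (∃ c : ℝ, 0 < c ∧
      ∀ (Sig : Type) (_ : Fintype Sig) (R : Set (Picture Sig))
        (Gam : Type) (_ : Fintype Gam) (T : Set (BTile Gam 2)) (π : Gam → Sig),
        2 ≤ Fintype.card Gam →
        R = Picture.map π '' SLTLang 2 T →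
        ∃ k : ℕ, 2 ≤ k ∧ (k : ℝ) ≤ c * Real.logb 2 (Fintype.card Gam) ∧
          PaddedEMT Sig R k) := by
  constructor
  · rintro Sig _ R ⟨Gam, _, T, π, rfl⟩
    exact ⟨_, by omega, Picture.paddedEMT_of_card_le T π (Picture.add_two_le_two_pow_log _) le_rfl⟩
  · refine ⟨9, by norm_num, ?_⟩
    rintro Sig _ R Gam _ T π hGam rfl
    refine ⟨_, by omega, ?_,
      Picture.paddedEMT_of_card_le T π (Picture.add_two_le_two_pow_log _) le_rfl⟩
    have hlog : (Nat.log 2 (Fintype.card Gam) : ℝ) ≤ Real.logb 2 (Fintype.card Gam) := by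
      exact_mod_cast Real.natLog_le_logb (Fintype.card Gam) 2
    have hone : (1 : ℝ) ≤ Real.logb 2 (Fintype.card Gam) := by
      rw [Real.le_logb_iff_rpow_le one_lt_two (by positivity), Real.rpow_one]
      exact_mod_cast hGam
    push_cast
    linarith
end

section
/- For every tiling recognizable picture language R ⊆ Σ^{++} there exist k ≥ 2 and a 2k-tiling system (Σ, Θ, T', π) with |Θ| = 2·|Σ| (alphabetic ratio 2) recognizing R, i.e., R = π(L(T')). Moreover there is an absolute constant c such that, if R is recognized by a tiling system with a local alphabet of size n ≥ 2, then k can be chosen with k ≤ c·log₂ n. -/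
/-- `R` is recognized by some `2k`-tiling system whose local alphabet `Θ`
has cardinality `2·|Σ|`, i.e. with alphabetic ratio 2. -/
def RatioTwoEMT (Sig : Type) [Fintype Sig] (R : Set (Picture Sig)) (k : ℕ) : Prop :=
  ∃ (Th : Type) (_ : Fintype Th),
    Fintype.card Th = 2 * Fintype.card Sig ∧
    ∃ (T' : Set (BTile Th (2 * k))) (π : Th → Sig),
      R = Picture.map π '' SLTLang (2 * k) T'

/-! A state of the given tiling system is coded by `l` bits. A picture over the local alphabet is
encoded by its projection, each cell of which carries one more bit. These bits divide the picture
into blocks of side `4 * (l + 1)`: the corner of each block is marked by a `2 × 2` square of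
1-bits, and the states on its first row and first column are spelled out on diagonals inside the
block, on cells of odd coordinate sum, so that no further `2 × 2` squares of 1-bits arise. The
tiles of the new system are all windows of encoded pictures, of side a little more than two
blocks.

Suppose that all windows of a picture `q` are of this kind. Neighbouring windows share a block
corner, so the block structure is the same for all windows. At a position on a block boundary, any
two windows that contain the code of the state there assign the same state to it. Hence `q` can be
decoded by one window per cell: the window is changed only along block boundaries, and there the
choice makes no difference, so that each `2 × 2` tile of the decoded picture is a tile of the
source of a single window. -/

namespace Picture

variable {A B : Type}

theorem isSome_bpix (p : Picture A) (u v : ℕ) :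
    (p.bpix u v).isSome ↔ (1 ≤ u ∧ u ≤ p.rows) ∧ (1 ≤ v ∧ v ≤ p.cols) := by
  unfold bpix
  split_ifs <;> simp only [Option.isSome_some, Option.isSome_none] <;> grind

theorem bpix_map (f : A → B) (p : Picture A) (u v : ℕ) :
    (p.map f).bpix u v = (p.bpix u v).map f := by
  unfold bpix map
  split_ifs <;> rfl

theorem ext_bpix {p q : Picture A} (hr : p.rows = q.rows) (hc : p.cols = q.cols)
    (h : ∀ u v, p.bpix u v = q.bpix u v) : p = q := by
  obtain ⟨m, n, _, _, f⟩ := p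
  obtain ⟨m', n', _, _, f'⟩ := q
  obtain rfl : m = m' := hr
  obtain rfl : n = n' := hc
  congr 1
  funext i j
  have hi : (i : ℕ) < m := i.2
  have hj : (j : ℕ) < n := j.2
  have hij := h (i + 1) (j + 1)
  simp only [bpix] at hij
  rw [dif_pos (by omega), dif_pos (by omega)] at hij
  simpa using hij

/-- The `m × n` picture whose bordered version is the array `F`; the index conventions are those
of `Picture.bpix`. -/
def ofBordered (m n : ℕ) (hm : 0 < m) (hn : 0 < n) (F : ℕ → ℕ → Option A)
    (hF : ∀ u v, (F u v).isSome ↔ (1 ≤ u ∧ u ≤ m) ∧ (1 ≤ v ∧ v ≤ n)) : Picture A :=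
  ⟨m, n, hm, hn, fun i j => (F (i + 1) (j + 1)).get ((hF _ _).2 (by omega))⟩

theorem bpix_ofBordered {m n : ℕ} (hm : 0 < m) (hn : 0 < n) {F : ℕ → ℕ → Option A}
    (hF : ∀ u v, (F u v).isSome ↔ (1 ≤ u ∧ u ≤ m) ∧ (1 ≤ v ∧ v ≤ n)) (u v : ℕ) :
    (ofBordered m n hm hn F hF).bpix u v = F u v := by
  unfold bpix
  split_ifs with h
  · simp only [ofBordered, Option.some_get, Nat.sub_add_cancel h.1, Nat.sub_add_cancel h.2.2.1]
  · refine (Option.not_isSome_iff_eq_none.1 fun hs => h ?_).symm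
    obtain ⟨⟨h1, h2⟩, h3, h4⟩ := (hF u v).1 hs
    exact ⟨h1, h2, h3, h4⟩

/-- The mirror image of a picture in its main diagonal, exchanging rows and columns. -/
def transpose (p : Picture A) : Picture A :=
  ⟨p.cols, p.rows, p.cols_pos, p.rows_pos, fun i j => p.pix j i⟩

theorem bpix_transpose (p : Picture A) (u v : ℕ) : p.transpose.bpix u v = p.bpix v u := by
  unfold bpix
  split_ifs <;> first | rfl | (simp only [transpose] at *; omega)

end Picture

namespace Medvedev

/-- The side length of the blocks into which pictures are divided when a state is coded by
`l` bits. Blocks are counted from the border, so that their first rows and columns are the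
bordered rows and columns with index a multiple of `blockSize l`. -/
def blockSize (l : ℕ) : ℕ := 4 * (l + 1)

theorem four_dvd_blockSize (l : ℕ) : 4 ∣ blockSize l := Nat.dvd_mul_right 4 (l + 1)

theorem four_le_blockSize (l : ℕ) : 4 ≤ blockSize l := Nat.le_mul_of_pos_right 4 l.succ_pos

theorem mod_blockSize_mod_four (l x : ℕ) : x % blockSize l % 4 = x % 4 :=
  Nat.mod_mod_of_dvd x (four_dvd_blockSize l)

/-- How far below a cell in the first row of a block the bit `e` of the code of that cell is
stored, if the cell lies in column `y`. The residue modulo 4 keeps these bits on the diagonals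
`x - y ≡ 1`, apart from the codes of the first columns on the diagonals `x - y ≡ 3`. -/
def codeOffset (e y : ℕ) : ℕ := 4 * (e + 1) + (y + 1) % 4

theorem codeOffset_lt_blockSize {l : ℕ} (e : Fin l) (y : ℕ) : codeOffset e y < blockSize l := by
  unfold codeOffset blockSize
  omega

theorem add_codeOffset_mod {l x : ℕ} (hx : blockSize l ∣ x) (e : Fin l) (y : ℕ) :
    (x + codeOffset e y) % blockSize l = codeOffset e y := by
  rw [Nat.add_mod, Nat.mod_eq_zero_of_dvd hx, Nat.zero_add, Nat.mod_mod,
    Nat.mod_eq_of_lt (codeOffset_lt_blockSize e y)]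

theorem codeOffset_congr {e y y' : ℕ} (h : y ≡ y' [MOD 4]) : codeOffset e y = codeOffset e y' := by
  unfold codeOffset
  rw [h.add_right 1]

variable {G S : Type} {l : ℕ} (code : G ↪ Set (Fin l)) (π : G → S)

/-- The bit at `(x, y)` belongs to the code of a cell in the first row of a block and is set.
A state is coded by the set of the positions of its 1-bits. -/
def IsRowCodeBit (p : Picture G) (x y : ℕ) : Prop :=
  ∃ x₀ g, ∃ e ∈ code g, blockSize l ∣ x₀ ∧ p.bpix x₀ y = some g ∧ x = x₀ + codeOffset e y

/-- The cells of a picture over the local alphabet that receive the bit 1: the `2 × 2` squares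
marking the block corners, and the 1-bits of the codes of the first row and of the first column
of each block. -/
def IsMarked (p : Picture G) (x y : ℕ) : Prop :=
  (x % blockSize l ≤ 1 ∧ y % blockSize l ≤ 1) ∨
    IsRowCodeBit code p x y ∨ IsRowCodeBit code p.transpose y x

open Classical in
/-- The projection of a picture over the local alphabet, enriched by one bit per cell. -/
noncomputable def encode (p : Picture G) : Picture (S × Bool) :=
  .ofBordered p.rows p.cols p.rows_pos p.cols_pos
    (fun u v => (p.bpix u v).map fun g => (π g, decide (IsMarked code p u v)))
    fun u v => by rw [Option.isSome_map, p.isSome_bpix]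

variable {code π}

open Classical in
theorem bpix_encode (p : Picture G) (u v : ℕ) : (encode code π p).bpix u v =
    (p.bpix u v).map fun g => (π g, decide (IsMarked code p u v)) :=
  Picture.bpix_ofBordered ..

theorem isMarked_transpose {p : Picture G} {x y : ℕ} :
    IsMarked code p.transpose x y ↔ IsMarked code p y x :=
  or_congr And.comm Or.comm

theorem encode_transpose (p : Picture G) :
    encode code π p.transpose = (encode code π p).transpose :=
  Picture.ext_bpix rfl rfl fun u v => by
    rw [Picture.bpix_transpose, bpix_encode, bpix_encode, Picture.bpix_transpose]
    congr! 4 with g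
    exact isMarked_transpose

theorem IsRowCodeBit.residues {p : Picture G} {x y : ℕ} (h : IsRowCodeBit code p x y) :
    4 ≤ x % blockSize l ∧ x % 4 = (y + 1) % 4 := by
  obtain ⟨x₀, g, e, -, hx₀, -, rfl⟩ := h
  rw [← mod_blockSize_mod_four l (x₀ + codeOffset e y), add_codeOffset_mod hx₀]
  unfold codeOffset
  omega

theorem IsMarked.residues {p : Picture G} {x y : ℕ} (h : IsMarked code p x y) :
    (x % blockSize l ≤ 1 ∧ y % blockSize l ≤ 1) ∨
      ((x + y) % 2 = 1 ∧ (4 ≤ x % blockSize l ∨ 4 ≤ y % blockSize l)) := by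
  rcases h with h | h | h
  · exact .inl h
  all_goals
    have := h.residues
    omega

theorem isRowCodeBit_iff_mem {p : Picture G} {x y : ℕ} (hx : blockSize l ∣ x) {g : G}
    (hg : p.bpix x y = some g) (e : Fin l) :
    IsRowCodeBit code p (x + codeOffset e y) y ↔ e ∈ code g := by
  refine ⟨?_, fun he => ⟨x, g, e, he, hx, hg, rfl⟩⟩
  rintro ⟨x₀, g', e', he', ⟨t, rfl⟩, hg', heq⟩
  obtain ⟨s, rfl⟩ := hx
  obtain rfl : s = t := by
    have hdiv := congrArg (· / blockSize l) heq
    have hb : 0 < blockSize l := (four_le_blockSize l).trans_lt' four_pos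
    simpa only [Nat.mul_add_div hb, Nat.div_eq_of_lt (codeOffset_lt_blockSize _ _), add_zero]
      using hdiv
  obtain rfl : e = e' := by
    unfold codeOffset at heq
    omega
  obtain rfl : g' = g := Option.some_injective _ (hg'.symm.trans hg)
  exact he'

theorem isMarked_iff_mem {p : Picture G} {x y : ℕ} (hx : blockSize l ∣ x) {g : G}
    (hg : p.bpix x y = some g) (e : Fin l) :
    IsMarked code p (x + codeOffset e y) y ↔ e ∈ code g := by
  have hmod := add_codeOffset_mod hx e y
  have hmod4 := mod_blockSize_mod_four l (x + codeOffset e y)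
  have not_corner : ¬((x + codeOffset e y) % blockSize l ≤ 1 ∧ y % blockSize l ≤ 1) := by
    unfold codeOffset at *
    omega
  have not_col : ¬IsRowCodeBit code p.transpose y (x + codeOffset e y) := fun h => by
    have := h.residues
    unfold codeOffset at *
    omega
  rw [IsMarked, or_iff_right not_corner, or_iff_left not_col, isRowCodeBit_iff_mem hx hg]

/-- The bits of `q` do not rule out a block corner at `(x, y)`: they are 1 on the part of the
`2 × 2` square at `(x, y)` inside `q`, and this part contains `(x + 1, y + 1)`. -/
def IsCorner (q : Picture (S × Bool)) (x y : ℕ) : Prop :=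
  (q.bpix (x + 1) (y + 1)).isSome ∧
    ∀ s ≤ 1, ∀ t ≤ 1, ∀ a, q.bpix (x + s) (y + t) ≠ some (a, false)

theorem isCorner_encode_iff_isMarked {p : Picture G} {x y : ℕ} :
    IsCorner (encode code π p) x y ↔ (x < p.rows ∧ y < p.cols) ∧
      ∀ s ≤ 1, ∀ t ≤ 1, 1 ≤ x + s → 1 ≤ y + t → IsMarked code p (x + s) (y + t) := by
  have inside : (1 ≤ x + 1 ∧ x + 1 ≤ p.rows) ∧ (1 ≤ y + 1 ∧ y + 1 ≤ p.cols) ↔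
      x < p.rows ∧ y < p.cols := by omega
  rw [IsCorner, bpix_encode, Option.isSome_map, p.isSome_bpix, inside]
  refine and_congr_right fun _ => forall₄_congr fun s hs t ht => ?_
  have hsome := p.isSome_bpix (x + s) (y + t)
  rw [bpix_encode]
  cases h : p.bpix (x + s) (y + t) with
  | none =>
    simp only [h, Option.isSome_none, Bool.false_eq_true, false_iff] at hsome
    exact iff_of_true (fun _ => nofun) fun _ _ => absurd (by omega) hsome
  | some g =>
    simp only [h, Option.isSome_some, true_iff] at hsome
    simp only [Option.map_some, ne_eq, Option.some.injEq, Prod.mk.injEq, decide_eq_false_iff_not,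
      not_and, not_not, hsome, true_imp_iff, forall_eq']

theorem mod_succ_cases (b x : ℕ) (hb : 2 ≤ b) :
    x % b + 1 = b ∧ (x + 1) % b = 0 ∨ x % b + 1 < b ∧ (x + 1) % b = x % b + 1 := by
  have := Nat.mod_lt x (by omega : b > 0)
  rw [Nat.add_mod x 1 b, Nat.mod_eq_of_lt (by omega : 1 < b)]
  rcases (by omega : x % b + 1 = b ∨ x % b + 1 < b) with h | h
  · exact .inl ⟨h, by rw [h, Nat.mod_self]⟩
  · exact .inr ⟨h, Nat.mod_eq_of_lt h⟩

-- The code bits have odd coordinate sum, so in a `2 × 2` square of 1-bits the two diagonally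
-- opposite cells of even coordinate sum belong to corner squares, hence to a single one. At the
-- border, where one of the two may be missing, a code bit next to a corner square is excluded since
-- it is at least 4 cells away from the first row or the first column of its block.
theorem isCorner_encode {p : Picture G} {x y : ℕ} :
    IsCorner (encode code π p) x y ↔
      (x < p.rows ∧ y < p.cols) ∧ blockSize l ∣ x ∧ blockSize l ∣ y := by
  rw [isCorner_encode_iff_isMarked]
  refine and_congr_right fun _ => ?_
  have hb := four_le_blockSize l
  have hx := mod_succ_cases (blockSize l) x (by omega)
  have hy := mod_succ_cases (blockSize l) y (by omega)
  rw [Nat.dvd_iff_mod_eq_zero, Nat.dvd_iff_mod_eq_zero]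
  constructor
  · intro h
    have hx0 : x = 0 → x % blockSize l = 0 := fun h => by rw [h, Nat.zero_mod]
    have hy0 : y = 0 → y % blockSize l = 0 := fun h => by rw [h, Nat.zero_mod]
    have hb4 := four_dvd_blockSize l
    have hx4 := mod_blockSize_mod_four l x
    have hy4 := mod_blockSize_mod_four l y
    have h00 := fun hx hy => (h 0 zero_le_one 0 zero_le_one hx hy).residues
    have h01 := fun hx => (h 0 zero_le_one 1 le_rfl hx (by omega)).residues
    have h10 := fun hy => (h 1 le_rfl 0 zero_le_one (by omega) hy).residues
    have h11 := (h 1 le_rfl 1 le_rfl (by omega) (by omega)).residues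
    simp only [add_zero] at h00 h01 h10
    clear h
    omega
  · rintro ⟨hx0, hy0⟩ s hs t ht - -
    left
    rw [Nat.add_mod x, Nat.add_mod y, hx0, hy0, zero_add, zero_add, Nat.mod_mod, Nat.mod_mod]
    exact ⟨(Nat.mod_le _ _).trans hs, (Nat.mod_le _ _).trans ht⟩

variable {q : Picture (S × Bool)} {i j i' j' u v : ℕ}

/-- The side length of the windows; a window contains a full block however it is placed. -/
def windowSize (l : ℕ) : ℕ := 2 * (blockSize l + 1)

variable (code π q i j) in
/-- A witness that the window of the bordered picture `q` with upper left corner `(i, j)` also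
occurs, at `(row, col)`, in the encoding of some picture `source`. -/
structure Patch where
  source : Picture G
  row : ℕ
  col : ℕ
  row_add_le : row + windowSize l ≤ borderRows source (windowSize l)
  col_add_le : col + windowSize l ≤ borderCols source (windowSize l)
  add_le_borderRows : i + windowSize l ≤ borderRows q (windowSize l)
  add_le_borderCols : j + windowSize l ≤ borderCols q (windowSize l)
  bpix_eq : ∀ a < windowSize l, ∀ c < windowSize l,
    q.bpix (i + a) (j + c) = (encode code π source).bpix (row + a) (col + c)

namespace Patch

/-- The mirror image of a patch, used to derive statements on columns from those on rows. -/
def transpose (w : Patch code π q i j) : Patch code π q.transpose j i where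
  source := w.source.transpose
  row := w.col
  col := w.row
  row_add_le := w.col_add_le
  col_add_le := w.row_add_le
  add_le_borderRows := w.add_le_borderCols
  add_le_borderCols := w.add_le_borderRows
  bpix_eq a ha c hc := by
    rw [encode_transpose, Picture.bpix_transpose, Picture.bpix_transpose, w.bpix_eq c hc a ha]

theorem row_content_iff (w : Patch code π q i j) {a : ℕ} (ha : a < windowSize l) :
    (1 ≤ i + a ∧ i + a ≤ q.rows) ↔ (1 ≤ w.row + a ∧ w.row + a ≤ w.source.rows) := by
  have one_lt : 1 < windowSize l := by unfold windowSize; omega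
  have hsome := congrArg (fun o => (o.isSome : Prop)) (w.bpix_eq a ha 1 one_lt)
  simp only [bpix_encode, Option.isSome_map, Picture.isSome_bpix, eq_iff_iff] at hsome
  have := four_le_blockSize l
  have := w.col_add_le
  have := w.add_le_borderCols
  have := q.cols_pos
  have := w.source.cols_pos
  unfold windowSize borderCols at *
  omega

theorem row_eq_zero_iff (w : Patch code π q i j) : w.row = 0 ↔ i = 0 := by
  have pos : 0 < windowSize l := by unfold windowSize; omega
  have := w.row_content_iff pos
  have := w.row_add_le
  have := w.add_le_borderRows
  unfold windowSize borderRows at *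
  omega

/-- The bordered picture `q` and the occurrence of the window in the encoded picture are divided
into blocks in the same way. -/
def IsAligned (w : Patch code π q i j) : Prop :=
  w.row ≡ i [MOD blockSize l] ∧ w.col ≡ j [MOD blockSize l]

theorem isCorner_iff (w : Patch code π q i j) {a c : ℕ} (ha : a + 1 < windowSize l)
    (hc : c + 1 < windowSize l) :
    IsCorner q (i + a) (j + c) ↔ IsCorner (encode code π w.source) (w.row + a) (w.col + c) := by
  have key : ∀ s ≤ 1, ∀ t ≤ 1, q.bpix (i + a + s) (j + c + t) =
      (encode code π w.source).bpix (w.row + a + s) (w.col + c + t) := fun s hs t ht => by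
    simpa only [add_assoc] using w.bpix_eq (a + s) (by omega) (c + t) (by omega)
  unfold IsCorner
  rw [key 1 le_rfl 1 le_rfl]
  refine and_congr_right fun _ => forall₄_congr fun s hs t ht => ?_
  rw [key s hs t ht]

theorem exists_corner_row (w : Patch code π q i j) {s : ℕ} (hs : s ≤ 1)
    (h : i + s + windowSize l ≤ borderRows q (windowSize l)) :
    ∃ a, a + s + 1 < windowSize l ∧ blockSize l ∣ w.row + s + a ∧
      w.row + s + a < w.source.rows := by
  have hb := four_le_blockSize l
  rcases Nat.eq_zero_or_pos (w.row + s) with h0 | hpos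
  · refine ⟨0, by unfold windowSize; omega, by rw [h0]; exact dvd_zero _, ?_⟩
    rw [h0]
    exact w.source.rows_pos
  · have hmod := Nat.mod_lt (w.row + s) (by omega : blockSize l > 0)
    have room : w.row + s + blockSize l < w.source.rows := by
      have := w.row_content_iff (a := windowSize l - 1) (by unfold windowSize; omega)
      have := w.row_eq_zero_iff
      have := w.row_add_le
      unfold borderRows windowSize at *
      omega
    refine ⟨blockSize l - (w.row + s) % blockSize l, by unfold windowSize; omega, ?_, by omega⟩
    rw [← Nat.add_sub_assoc hmod.le, Nat.sub_add_comm (Nat.mod_le _ _)]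
    exact (Nat.dvd_sub_mod _).add (dvd_refl _)

theorem IsAligned.step {s t : ℕ} {w : Patch code π q i j} (h : w.IsAligned)
    (w' : Patch code π q (i + s) (j + t)) (hs : s ≤ 1) (ht : t ≤ 1) : w'.IsAligned := by
  obtain ⟨a, ha, hrow, hrow'⟩ := w.exists_corner_row hs w'.add_le_borderRows
  obtain ⟨c, hc, hcol, hcol'⟩ := w.transpose.exists_corner_row ht w'.add_le_borderCols
  have hw : IsCorner q (i + (s + a)) (j + (t + c)) := by
    rw [w.isCorner_iff (by omega) (by omega), isCorner_encode]
    simp only [← add_assoc]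
    exact ⟨⟨hrow', hcol'⟩, hrow, hcol⟩
  rw [← add_assoc, ← add_assoc, w'.isCorner_iff (by omega) (by omega), isCorner_encode] at hw
  obtain ⟨-, hrow'', hcol''⟩ := hw
  have cancel {x x' y r d : ℕ} (hxy : x ≡ y [MOD blockSize l]) (hx : blockSize l ∣ x + r + d)
      (hx' : blockSize l ∣ x' + d) : x' ≡ y + r [MOD blockSize l] :=
    Nat.ModEq.add_right_cancel' d <| ((Nat.modEq_zero_iff_dvd.2 hx').trans
      (Nat.modEq_zero_iff_dvd.2 hx).symm).trans ((hxy.add_right r).add_right d)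
  exact ⟨cancel h.1 hrow hrow'', cancel h.2 hcol hcol''⟩

/-- The entry of the bordered `source` that corresponds to position `(u, v)` of `q`, provided that
`(u, v)` lies in the window. -/
def value (w : Patch code π q i j) (u v : ℕ) : Option G :=
  w.source.bpix (w.row + (u - i)) (w.col + (v - j))

theorem value_transpose (w : Patch code π q i j) (u v : ℕ) :
    w.transpose.value v u = w.value u v :=
  Picture.bpix_transpose ..

open Classical in
theorem bpix_eq_map_value (w : Patch code π q i j) (hu : i ≤ u ∧ u < i + windowSize l)
    (hv : j ≤ v ∧ v < j + windowSize l) :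
    q.bpix u v = (w.value u v).map fun g =>
      (π g, decide (IsMarked code w.source (w.row + (u - i)) (w.col + (v - j)))) := by
  have := w.bpix_eq (u - i) (by omega) (v - j) (by omega)
  rwa [Nat.add_sub_cancel' hu.1, Nat.add_sub_cancel' hv.1, bpix_encode] at this

theorem map_value (w : Patch code π q i j) (hu : i ≤ u ∧ u < i + windowSize l)
    (hv : j ≤ v ∧ v < j + windowSize l) :
    (w.value u v).map π = (q.bpix u v).map Prod.fst := by
  rw [w.bpix_eq_map_value hu hv, Option.map_map]
  rfl

theorem isSome_value (w : Patch code π q i j) (hu : i ≤ u ∧ u < i + windowSize l)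
    (hv : j ≤ v ∧ v < j + windowSize l) : (w.value u v).isSome = (q.bpix u v).isSome := by
  rw [w.bpix_eq_map_value hu hv, Option.isSome_map]

theorem mem_code_value_iff {w : Patch code π q i j} (hw : w.IsAligned) (hb : blockSize l ∣ u)
    (hq : u + blockSize l ≤ q.rows + 1) (hu : i ≤ u ∧ u + blockSize l ≤ i + windowSize l)
    (hv : j ≤ v ∧ v < j + windowSize l) {g : G} (hg : w.value u v = some g) (e : Fin l) :
    e ∈ code g ↔ ∃ σ, q.bpix (u + codeOffset e v) v = some (σ, true) := by
  have ho := codeOffset_lt_blockSize e v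
  have hx : blockSize l ∣ w.row + (u - i) := by
    have := hw.1.add_right (u - i)
    rw [Nat.add_sub_cancel' hu.1] at this
    exact Nat.modEq_zero_iff_dvd.1 (this.trans (Nat.modEq_zero_iff_dvd.2 hb))
  have hy : w.col + (v - j) ≡ v [MOD 4] := by
    have := (hw.2.add_right (v - j)).of_dvd (four_dvd_blockSize l)
    rwa [Nat.add_sub_cancel' hv.1] at this
  have hcell : (w.value (u + codeOffset e v) v).isSome := by
    have := w.isSome_value (u := u) (by omega) hv
    rw [hg, Option.isSome_some, eq_comm, q.isSome_bpix] at this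
    rw [w.isSome_value (by omega) hv, q.isSome_bpix]
    omega
  obtain ⟨g', hg'⟩ := Option.isSome_iff_exists.1 hcell
  rw [← isMarked_iff_mem hx hg, codeOffset_congr hy, w.bpix_eq_map_value (by omega) hv, hg',
    Nat.sub_add_comm hu.1, add_assoc]
  simp only [Option.map_some, Option.some.injEq, Prod.mk.injEq, decide_eq_true_eq,
    exists_and_right, exists_eq', true_and]

theorem value_eq_of_dvd_row {w : Patch code π q i j} {w' : Patch code π q i' j'}
    (hw : w.IsAligned) (hw' : w'.IsAligned) (hb : blockSize l ∣ u)
    (hq : u + blockSize l ≤ q.rows + 1) (hu : i ≤ u ∧ u + blockSize l ≤ i + windowSize l)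
    (hu' : i' ≤ u ∧ u + blockSize l ≤ i' + windowSize l) (hv : j ≤ v ∧ v < j + windowSize l)
    (hv' : j' ≤ v ∧ v < j' + windowSize l) : w.value u v = w'.value u v := by
  have := four_le_blockSize l
  have hsome : (w.value u v).isSome = (w'.value u v).isSome := by
    rw [w.isSome_value (by omega) hv, w'.isSome_value (by omega) hv']
  rcases h : w.value u v with _ | g <;> rcases h' : w'.value u v with _ | g'
  · rfl
  · simp [h, h'] at hsome
  · simp [h, h'] at hsome
  · congr 1
    refine code.injective (Set.ext fun e => ?_)
    rw [mem_code_value_iff hw hb hq hu hv h, mem_code_value_iff hw' hb hq hu' hv' h']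

theorem row_add_sub_le (w : Patch code π q i j) (hu : i ≤ u ∧ u < i + windowSize l)
    (hq : u ≤ q.rows) : w.row + (u - i) ≤ w.source.rows := by
  have := w.row_content_iff (a := u - i) (by omega)
  have := w.row_eq_zero_iff
  omega

theorem tile_mem (w : Patch code π q i j) (hu : i ≤ u ∧ u < i + windowSize l) (hur : u ≤ q.rows)
    (hv : j ≤ v ∧ v < j + windowSize l) (hvc : v ≤ q.cols) :
    (fun a c : Fin 2 => w.value (u + a) (v + c)) ∈ tilesOf 2 w.source := by
  refine ⟨w.row + (u - i), w.col + (v - j), ?_, ?_, fun a c => ?_⟩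
  · exact (Nat.add_le_add_right (w.row_add_sub_le hu hur) 2).trans (le_max_left _ _)
  · exact (Nat.add_le_add_right (w.transpose.row_add_sub_le hv hvc) 2).trans (le_max_left _ _)
  · simp only [value]
    rw [Nat.sub_add_comm hu.1, Nat.sub_add_comm hv.1, add_assoc, add_assoc]

end Patch

/-- The row in which the window used at row `u` of a picture with `m` rows starts: the first row of
the block of `u`, unless this window would leave the bordered picture. -/
def windowStart (l m u : ℕ) : ℕ := min (u / blockSize l * blockSize l) (m - 2 * blockSize l)

theorem windowStart_add_le (l m u : ℕ) :
    windowStart l m u + windowSize l ≤ max (m + 2) (windowSize l) := by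
  unfold windowStart windowSize
  omega

theorem windowStart_le (l m u : ℕ) : windowStart l m u ≤ u :=
  (min_le_left _ _).trans (Nat.div_mul_le_self u _)

theorem mem_window {l m u : ℕ} (hu : u ≤ m + 1) :
    windowStart l m u ≤ u ∧ u < windowStart l m u + windowSize l := by
  refine ⟨windowStart_le l m u, ?_⟩
  have := Nat.lt_div_mul_add (a := u) ((four_le_blockSize l).trans_lt' four_pos)
  unfold windowStart windowSize
  omega

theorem add_mem_window {l m u s : ℕ} (hu : u ≤ m) (hs : s ≤ 1) :
    windowStart l m u ≤ u + s ∧ u + s < windowStart l m u + windowSize l := by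
  have := windowStart_le l m u
  have := Nat.lt_div_mul_add (a := u) ((four_le_blockSize l).trans_lt' four_pos)
  unfold windowStart windowSize at *
  omega

theorem windowStart_mono (l m : ℕ) : Monotone (windowStart l m) := fun _ _ h =>
  min_le_min_right _ (Nat.mul_le_mul_right _ (Nat.div_le_div_right h))

theorem windowStart_succ (l m u : ℕ) : windowStart l m (u + 1) = windowStart l m u ∨
    blockSize l ∣ u + 1 ∧ u + 1 + blockSize l ≤ m + 1 ∧
      u + 1 + blockSize l ≤ windowStart l m u + windowSize l := by
  unfold windowStart windowSize
  rw [Nat.succ_div]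
  split_ifs with h
  · have hdiv : (u + 1) / blockSize l * blockSize l = u + 1 := Nat.div_mul_cancel h
    rw [Nat.succ_div_of_dvd h, add_one_mul] at hdiv
    rw [add_one_mul]
    omega
  · exact .inl rfl

variable (code π q) in
/-- A choice of a patch for each window of the bordered picture `q`. -/
abbrev Atlas : Type :=
  ∀ i j, i + windowSize l ≤ borderRows q (windowSize l) →
    j + windowSize l ≤ borderCols q (windowSize l) → Patch code π q i j

namespace Atlas

theorem isAligned (P : Atlas code π q) {i j : ℕ}
    (hi : i + windowSize l ≤ borderRows q (windowSize l))
    (hj : j + windowSize l ≤ borderCols q (windowSize l)) : (P i j hi hj).IsAligned := by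
  induction i with
  | zero =>
    induction j with
    | zero =>
      have hrow := (P 0 0 hi hj).row_eq_zero_iff.2 rfl
      have hcol := (P 0 0 hi hj).transpose.row_eq_zero_iff.2 rfl
      exact ⟨congrArg (· % _) hrow, congrArg (· % _) hcol⟩
    | succ j ih => exact (ih (by omega)).step (s := 0) (t := 1) _ zero_le_one le_rfl
  | succ i ih => exact (ih (by omega)).step (s := 1) (t := 0) _ le_rfl zero_le_one

/-- The atlas consisting of the mirror images of the patches of `P`. -/
def transpose (P : Atlas code π q) : Atlas code π q.transpose :=
  fun i j hi hj => (P j i hj hi).transpose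

theorem value_add_row (P : Atlas code π q) (u : ℕ) {j v s : ℕ}
    (hj : j + windowSize l ≤ borderCols q (windowSize l)) (hs : s ≤ 1)
    (hv : j ≤ v ∧ v < j + windowSize l) :
    (P (windowStart l q.rows (u + s)) j (windowStart_add_le ..) hj).value (u + s) v =
      (P (windowStart l q.rows u) j (windowStart_add_le ..) hj).value (u + s) v := by
  have same_window : ∀ i i' hi hi', i = i' →
      (P i j hi hj).value (u + s) v = (P i' j hi' hj).value (u + s) v := by
    rintro i _ hi hi' rfl
    rfl
  obtain rfl | rfl := Nat.le_one_iff_eq_zero_or_eq_one.1 hs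
  · rfl
  rcases windowStart_succ l q.rows u with h | ⟨hdvd, hrows, hwindow⟩
  · exact same_window _ _ _ _ h
  · have hmono := windowStart_mono l q.rows u.le_succ
    exact Patch.value_eq_of_dvd_row (P.isAligned _ hj) (P.isAligned _ hj) hdvd hrows
      ⟨windowStart_le .., hwindow.trans (Nat.add_le_add_right hmono _)⟩
      ⟨hmono.trans (windowStart_le ..), hwindow⟩ hv hv

/-- The patch in which the entry at `(u, v)` of the glued picture is looked up. -/
def patch (P : Atlas code π q) (u v : ℕ) :
    Patch code π q (windowStart l q.rows u) (windowStart l q.cols v) :=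
  P _ _ (windowStart_add_le ..) (windowStart_add_le ..)

theorem isSome_value_patch (P : Atlas code π q) {u v : ℕ} (hu : u ≤ q.rows + 1)
    (hv : v ≤ q.cols + 1) : ((P.patch u v).value u v).isSome = (q.bpix u v).isSome :=
  (P.patch u v).isSome_value (mem_window hu) (mem_window hv)

/-- The picture over the local alphabet that is put together from the patches of `P`. -/
def glued (P : Atlas code π q) : Picture G :=
  .ofBordered q.rows q.cols q.rows_pos q.cols_pos
    (fun u v => (q.bpix u v).bind fun _ => (P.patch u v).value u v)
    fun u v => by
      rw [← q.isSome_bpix]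
      cases h : q.bpix u v with
      | none => rfl
      | some a =>
        have := (q.isSome_bpix u v).1 (by rw [h]; rfl)
        rw [Option.bind_some, P.isSome_value_patch (by omega) (by omega), h]

theorem bpix_glued (P : Atlas code π q) {u v : ℕ} (hu : u ≤ q.rows + 1) (hv : v ≤ q.cols + 1) :
    P.glued.bpix u v = (P.patch u v).value u v := by
  rw [glued, Picture.bpix_ofBordered]
  cases h : q.bpix u v with
  | none =>
    refine (Option.isNone_iff_eq_none.1 ?_).symm
    rw [← Option.not_isSome, P.isSome_value_patch hu hv, h]
    rfl
  | some a => rfl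

theorem map_glued (P : Atlas code π q) : P.glued.map π = q.map Prod.fst := by
  refine Picture.ext_bpix rfl rfl fun u v => ?_
  rw [Picture.bpix_map, Picture.bpix_map]
  by_cases h : u ≤ q.rows + 1 ∧ v ≤ q.cols + 1
  · rw [P.bpix_glued h.1 h.2]
    exact (P.patch u v).map_value (mem_window h.1) (mem_window h.2)
  · rw [glued, Picture.bpix_ofBordered]
    have : ¬(q.bpix u v).isSome := fun hs => by rw [q.isSome_bpix] at hs; omega
    rw [Option.not_isSome_iff_eq_none.1 this]
    rfl

theorem bpix_glued_add (P : Atlas code π q) {u v s t : ℕ} (hu : u ≤ q.rows) (hv : v ≤ q.cols)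
    (hs : s ≤ 1) (ht : t ≤ 1) :
    P.glued.bpix (u + s) (v + t) = (P.patch u v).value (u + s) (v + t) := by
  rw [P.bpix_glued (by omega) (by omega)]
  have row := P.value_add_row u (windowStart_add_le ..) hs
    (mem_window (by omega : v + t ≤ q.cols + 1))
  have col := P.transpose.value_add_row v (windowStart_add_le l q.rows u) ht (add_mem_window hu hs)
  simp only [transpose, Patch.value_transpose] at col
  exact row.trans col

theorem glued_mem {T : Set (BTile G 2)} (P : Atlas code π q)
    (hP : ∀ i j hi hj, (P i j hi hj).source ∈ SLTLang 2 T) : P.glued ∈ SLTLang 2 T := by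
  rintro t ⟨u, v, hu, hv, ht⟩
  replace hu : u ≤ q.rows := Nat.le_of_add_le_add_right (hu.trans_eq (max_eq_left (by omega)))
  replace hv : v ≤ q.cols := Nat.le_of_add_le_add_right (hv.trans_eq (max_eq_left (by omega)))
  have htile : t = fun a c : Fin 2 => (P.patch u v).value (u + a) (v + c) := by
    funext a c
    rw [ht, P.bpix_glued_add hu hv (by omega) (by omega)]
  rw [htile]
  exact hP _ _ _ _ ((P.patch u v).tile_mem (mem_window (by omega)) hu (mem_window (by omega)) hv)

end Atlas

theorem map_fst_encode (p : Picture G) : (encode code π p).map Prod.fst = p.map π :=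
  Picture.ext_bpix rfl rfl fun u v => by
    rw [Picture.bpix_map, Picture.bpix_map, bpix_encode, Option.map_map]
    rfl

theorem ratioTwoEMT_image [Fintype S] (code : G ↪ Set (Fin l)) (T : Set (BTile G 2)) (π : G → S) :
    RatioTwoEMT S (Picture.map π '' SLTLang 2 T) (blockSize l + 1) := by
  refine ⟨S × Bool, inferInstance, by rw [Fintype.card_prod, Fintype.card_bool, mul_comm],
    {t | ∃ p ∈ SLTLang 2 T, t ∈ tilesOf (windowSize l) (encode code π p)}, Prod.fst, ?_⟩
  apply Set.Subset.antisymm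
  · rintro _ ⟨p, hp, rfl⟩
    exact ⟨encode code π p, fun t ht => ⟨p, hp, ht⟩, map_fst_encode p⟩
  · rintro _ ⟨q, hq, rfl⟩
    have exists_patch : ∀ i j, i + windowSize l ≤ borderRows q (windowSize l) →
        j + windowSize l ≤ borderCols q (windowSize l) →
        ∃ w : Patch code π q i j, w.source ∈ SLTLang 2 T := fun i j hi hj => by
      obtain ⟨p, hp, x, y, hx, hy, htile⟩ := hq ⟨i, j, hi, hj, fun _ _ => rfl⟩
      exact ⟨⟨p, x, y, hx, hy, hi, hj, fun a ha c hc => htile ⟨a, ha⟩ ⟨c, hc⟩⟩, hp⟩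
    choose P hP using exists_patch
    exact ⟨Atlas.glued P, Atlas.glued_mem P hP, Atlas.map_glued P⟩

theorem ratioTwoEMT_of_card_le [Fintype G] [Fintype S] {R : Set (Picture S)} {T : Set (BTile G 2)}
    (hR : R = Picture.map π '' SLTLang 2 T) (hG : Fintype.card G ≤ 2 ^ l) :
    RatioTwoEMT S R (4 * l + 5) := by
  have hcard : Fintype.card G ≤ Fintype.card (Set (Fin l)) := by
    rwa [Fintype.card_set, Fintype.card_fin]
  obtain ⟨code⟩ := Function.Embedding.nonempty_of_card_le hcard
  exact hR ▸ ratioTwoEMT_image code T π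

end Medvedev

/-- Extended Medvedev theorem for picture languages: every tiling
recognizable `R ⊆ Σ^{++}` is recognized, for some `k ≥ 2`, by a `2k`-tiling
system with alphabetic ratio 2; moreover there is an absolute constant `c`
such that if `R` is recognized by a tiling system with a local alphabet of
size `n ≥ 2`, then `k` can be chosen with `k ≤ c·log₂ n`. -/
theorem extended_Medvedev_for_pictures :
    (∀ (Sig : Type) (_ : Fintype Sig) (R : Set (Picture Sig)),
      TilingRecognizable R → ∃ k : ℕ, 2 ≤ k ∧ RatioTwoEMT Sig R k) ∧
    (∃ c : ℝ, 0 < c ∧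
      ∀ (Sig : Type) (_ : Fintype Sig) (R : Set (Picture Sig))
        (Gam : Type) (_ : Fintype Gam) (T : Set (BTile Gam 2)) (π : Gam → Sig),
        2 ≤ Fintype.card Gam →
        R = Picture.map π '' SLTLang 2 T →
        ∃ k : ℕ, 2 ≤ k ∧ (k : ℝ) ≤ c * Real.logb 2 (Fintype.card Gam) ∧
          RatioTwoEMT Sig R k) := by
  constructor
  · rintro Sig _ R ⟨Gam, _, T, π, hR⟩
    exact ⟨_, by omega, Medvedev.ratioTwoEMT_of_card_le hR Nat.lt_two_pow_self.le⟩
  · refine ⟨13, by norm_num, fun Sig _ R Gam _ T π hn hR => ?_⟩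
    have hcard := (Nat.lt_pow_succ_log_self one_lt_two (Fintype.card Gam)).le
    refine ⟨_, by omega, ?_, Medvedev.ratioTwoEMT_of_card_le hR hcard⟩
    have hlog := Real.natLog_le_logb (Fintype.card Gam) 2
    have hone : 1 ≤ Real.logb 2 (Fintype.card Gam) := by
      rw [Real.le_logb_iff_rpow_le one_lt_two (by positivity), Real.rpow_one]
      exact_mod_cast hn
    push_cast at hlog ⊢
    linarith
end
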